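/- arXiv:1807.00642 — 6 statements merged into one kernel-verified Lean document; each statement's English description precedes it below -/
import Mathlib

section
/- (Macaulay-type maximal growth) Let Z ⊂ ℙⁿ(ℂ) be a finite set. If for some j > 0 one has Dh_Z(j) ≤ j, then Dh_Z(j+1) ≤ Dh_Z(j). In particular, if Dh_Z(j) = 0 for some j > 0, then Dh_Z(i) = 0 for all i ≥ j. -/
open MvPolynomial

abbrev ProjPt (n : ℕ) := Projectivization ℂ (Fin (n+1) → ℂ)

/-- The linear form with coefficient vector `v`: `v 0 • x 0 + ⋯ + v n • x n`. -/
noncomputable def linForm (n : ℕ) (v : Fin (n+1) → ℂ) : MvPolynomial (Fin (n+1)) ℂ :=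
  ∑ i, C (v i) * X i

/-- The evaluation map of degree `d` on (coordinate vectors of) the finite set
`Z ⊂ ℙⁿ(ℂ)`, from degree-`d` forms to `ℂ^{ℓ(Z)}`. -/
noncomputable def evalMap (n d : ℕ) (Z : Finset (ProjPt n)) :
    homogeneousSubmodule (Fin (n+1)) ℂ d →ₗ[ℂ] ({ x // x ∈ Z } → ℂ) where
  toFun F := fun P => eval (P : ProjPt n).rep (F : MvPolynomial (Fin (n+1)) ℂ)
  map_add' F G := by funext P; simp
  map_smul' c F := by funext P; simp

/-- The Hilbert function of a finite set `Z ⊂ ℙⁿ(ℂ)`: the rank of the evaluation map. -/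
noncomputable def hilb (n : ℕ) (Z : Finset (ProjPt n)) (d : ℕ) : ℕ :=
  Module.finrank ℂ ↥(LinearMap.range (evalMap n d Z))

/-- The Hilbert function, extended to `ℤ` by `0` in negative degrees. -/
noncomputable def hilbZ (n : ℕ) (Z : Finset (ProjPt n)) (d : ℤ) : ℤ :=
  if d < 0 then 0 else hilb n Z d.toNat

/-- The first difference of the Hilbert function, `Dh_Z(d) = h_Z(d) - h_Z(d-1)`. -/
noncomputable def dHilb (n : ℕ) (Z : Finset (ProjPt n)) (d : ℤ) : ℤ :=
  hilbZ n Z d - hilbZ n Z (d - 1)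

open Finset in
/-- At most `d` monomials of degree `d` have a shadow that is at least as large. -/
theorem card_le_card_of_shadow_subset {ι : Type*} [DecidableEq ι] (T : Finset ι) (d : ℕ)
    (M N : Finset (ι →₀ ℕ)) (hout : ∀ m ∈ M, ∀ m' ∈ M, ∀ i ∉ T, m i = m' i)
    (hdeg : ∀ m ∈ M, ∑ i ∈ T, m i = d) (hcard : #M ≤ d)
    (hN : ∀ m ∈ M, ∀ i ∈ T, m i ≠ 0 → m - Finsupp.single i 1 ∈ N) : #M ≤ #N := by
  induction T using Finset.induction_on generalizing d M N with
  | empty =>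
    rcases M.eq_empty_or_nonempty with rfl | ⟨m, hm⟩
    · simp
    · have := hdeg m hm
      simp at this
      omega
  | insert x T hx ih =>
    have hex : ∃ b, b ∉ M.image (fun m => m x) := Infinite.exists_notMem_finset _
    classical
    let b := Nat.find hex
    have hb : ∀ m ∈ M, m x ≠ b := fun m hm h =>
      Nat.find_spec hex (mem_image.2 ⟨m, hm, h⟩)
    have hlt : ∀ a < b, ∃ m ∈ M, m x = a := fun a ha => by
      simpa using not_not.1 (Nat.find_min hex ha)
    -- the layers below the first gap `b` are handled by induction
    have hlayer : ∀ a ∈ range b, #{m ∈ M | m x = a} ≤ #{m ∈ N | m x = a} := by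
      intro a ha
      have hab := mem_range.1 ha
      have hcount : #{m ∈ M | m x = a} + (b - 1) ≤ #M := by
        have h1 : b - 1 ≤ #{m ∈ M | ¬ m x = a} := by
          calc b - 1 = #((range b).erase a) := by rw [card_erase_of_mem ha, card_range]
            _ ≤ #(({m ∈ M | ¬ m x = a}).image fun m => m x) := by
              refine card_le_card fun c hc => ?_
              obtain ⟨m, hm, rfl⟩ := hlt c (mem_range.1 (mem_of_mem_erase hc))
              exact mem_image_of_mem _ (mem_filter.2 ⟨hm, ne_of_mem_erase hc⟩)
            _ ≤ _ := card_image_le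
        have h2 := card_filter_add_card_filter_not (s := M) (fun m => m x = a)
        omega
      refine ih (d - a) _ _ ?_ ?_ (by omega) ?_
      · intro m hm m' hm' i hi
        rw [mem_filter] at hm hm'
        by_cases hix : i = x
        · rw [hix, hm.2, hm'.2]
        · exact hout m hm.1 m' hm'.1 i (by simp [hix, hi])
      · intro m hm
        rw [mem_filter] at hm
        have := hdeg m hm.1
        rw [sum_insert hx] at this
        omega
      · intro m hm i hi hmi
        rw [mem_filter] at hm ⊢
        refine ⟨hN m hm.1 i (mem_insert_of_mem hi) hmi, ?_⟩
        have : i ≠ x := fun h => hx (h ▸ hi)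
        simp [this, hm.2]
    have hbelow : #{m ∈ M | m x < b} ≤ #{m ∈ N | m x < b} := by
      have key : ∀ S : Finset (ι →₀ ℕ), #{m ∈ S | m x < b} = ∑ a ∈ range b, #{m ∈ S | m x = a} := by
        intro S
        rw [card_eq_sum_card_fiberwise (f := fun m => m x) (t := range b)
          (fun m hm => by simpa using (mem_filter.1 hm).2)]
        refine sum_congr rfl fun a ha => ?_
        rw [filter_filter]
        congr 1
        refine filter_congr fun m _ => ?_
        have := mem_range.1 ha
        constructor
        · exact fun h => h.2
        · exact fun h => ⟨by omega, h⟩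
      rw [key, key]
      exact sum_le_sum hlayer
    have habove : #{m ∈ M | ¬ m x < b} ≤ #{m ∈ N | ¬ m x < b} := by
      refine card_le_card_of_injOn (fun m => m - Finsupp.single x 1) ?_ ?_
      · intro m hm
        have hm := mem_filter.1 hm
        have := hb m hm.1
        refine mem_filter.2 ⟨hN m hm.1 x (mem_insert_self _ _) (by omega), ?_⟩
        simp
        omega
      · intro m hm m' hm' h
        have hm := mem_filter.1 hm
        have hm' := mem_filter.1 hm'
        have h1 := hb m hm.1
        have h2 := hb m' hm'.1
        ext i
        have hi := DFunLike.congr_fun h i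
        by_cases hix : i = x
        · subst hix
          simp at hi
          omega
        · simpa [Ne.symm hix] using hi
    have h1 := card_filter_add_card_filter_not (s := M) (fun m => m x < b)
    have h2 := card_filter_add_card_filter_not (s := N) (fun m => m x < b)
    omega

open Finset Classical in
/-- The elements of a finite family, ordered by `g`, that are not spanned modulo `W` by their
predecessors form a basis of the span of the family modulo `W`. -/
theorem finrank_sup_span_eq_add_card {K V κ α : Type*} [Field K] [AddCommGroup V] [Module K V]
    [FiniteDimensional K V] [LinearOrder α] (g : κ → α) (hg : Function.Injective g)
    (W : Submodule K V) (f : κ → V) (s : Finset κ) :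
    Module.finrank K ↥(W ⊔ Submodule.span K (f '' s)) = Module.finrank K W +
      #{i ∈ s | f i ∉ W ⊔ Submodule.span K (f '' {j | j ∈ s ∧ g j < g i})} := by
  induction s using Finset.induction_on_max_value g with
  | empty =>
    rw [coe_empty, Set.image_empty, Submodule.span_empty, sup_bot_eq]
    simp
  | insert a s ha hmax ih =>
    have hlt : ∀ x ∈ s, g x < g a := fun x hx =>
      lt_of_le_of_ne (hmax x hx) fun h => ha (hg h ▸ hx)
    have hself : {j | j ∈ insert a s ∧ g j < g a} = (s : Set κ) := by
      ext j
      simp only [mem_insert, Set.mem_ofPred_eq, mem_coe]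
      exact ⟨fun h => h.1.resolve_left fun e => (e ▸ h.2).false, fun h => ⟨.inr h, hlt j h⟩⟩
    have hold : ∀ i ∈ s, {j | j ∈ insert a s ∧ g j < g i} = {j | j ∈ s ∧ g j < g i} := by
      intro i hi
      ext j
      simp only [mem_insert, Set.mem_ofPred_eq]
      exact ⟨fun h => ⟨h.1.resolve_left fun e => ((e ▸ h.2).trans (hlt i hi)).false, h.2⟩,
        fun h => ⟨.inr h.1, h.2⟩⟩
    have hfilter : ({i ∈ s | f i ∉ W ⊔ Submodule.span K (f '' {j | j ∈ insert a s ∧ g j < g i})}) =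
        {i ∈ s | f i ∉ W ⊔ Submodule.span K (f '' {j | j ∈ s ∧ g j < g i})} :=
      filter_congr fun i hi => by rw [hold i hi]
    have hspan : W ⊔ Submodule.span K (f '' ↑(insert a s)) =
        (W ⊔ Submodule.span K (f '' s)) ⊔ Submodule.span K {f a} := by
      rw [coe_insert, Set.image_insert_eq, Submodule.span_insert, sup_assoc,
        sup_comm (Submodule.span K {f a})]
    rw [filter_insert, hself, hfilter, hspan]
    by_cases hfa : f a ∈ W ⊔ Submodule.span K (f '' s)
    · rw [if_neg (not_not.2 hfa), sup_eq_left.2 (by simpa using hfa), ih]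
    · rw [if_pos hfa, card_insert_of_notMem (by simp [ha]), ← add_assoc, ← ih]
      have hne : f a ≠ 0 := fun h => hfa (h ▸ Submodule.zero_mem _)
      have hdisj : Disjoint (W ⊔ Submodule.span K (f '' s)) (Submodule.span K {f a}) :=
        (Submodule.disjoint_span_singleton' hne).2 hfa
      have := Submodule.finrank_sup_add_finrank_inf_eq (W ⊔ Submodule.span K (f '' s))
        (Submodule.span K {f a})
      rw [hdisj.eq_bot, finrank_bot, finrank_span_singleton hne] at this
      omega

/-- The vector of values at (coordinate vectors of) the points of `Z` of the monomial with
exponent `m`. -/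
noncomputable def monomialValues (n : ℕ) (Z : Finset (ProjPt n)) (m : Fin (n+1) →₀ ℕ) :
    { x // x ∈ Z } → ℂ :=
  fun P => ∏ i, (P : ProjPt n).rep i ^ m i

/-- The exponents of the monomials of degree `d` in `n + 1` variables. -/
noncomputable def degreeExponents (n d : ℕ) : Finset (Fin (n+1) →₀ ℕ) :=
  Finset.finsuppAntidiag Finset.univ d

theorem mem_degreeExponents {n d : ℕ} {m : Fin (n+1) →₀ ℕ} :
    m ∈ degreeExponents n d ↔ ∑ i, m i = d := by
  simp [degreeExponents]

theorem monomialValues_add_single (n : ℕ) (Z : Finset (ProjPt n)) (m : Fin (n+1) →₀ ℕ)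
    (i : Fin (n+1)) :
    monomialValues n Z (m + Finsupp.single i 1) =
      (fun P : { x // x ∈ Z } => (P : ProjPt n).rep i) * monomialValues n Z m := by
  funext P
  simp only [monomialValues, Pi.mul_apply, Finsupp.add_apply, pow_add, Finset.prod_mul_distrib]
  rw [mul_comm]
  congr 1
  rw [Finset.prod_eq_single i]
  · simp
  · intro k _ hk
    simp [Ne.symm hk]
  · simp

theorem range_evalMap_eq_span (n d : ℕ) (Z : Finset (ProjPt n)) :
    LinearMap.range (evalMap n d Z) =
      Submodule.span ℂ (monomialValues n Z '' degreeExponents n d) := by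
  apply le_antisymm
  · rintro _ ⟨⟨F, hF⟩, rfl⟩
    have : evalMap n d Z ⟨F, hF⟩ = ∑ m ∈ F.support, F.coeff m • monomialValues n Z m := by
      funext P
      simp [evalMap, monomialValues, eval_eq']
    rw [this]
    refine Submodule.sum_mem _ fun m hm => Submodule.smul_mem _ _ (Submodule.subset_span ?_)
    refine ⟨m, mem_degreeExponents.2 ?_, rfl⟩
    have := (mem_homogeneousSubmodule d F).1 hF (mem_support_iff.1 hm)
    rw [← Finsupp.degree_eq_sum, Finsupp.degree_eq_weight_one]
    exact this
  · rw [Submodule.span_le]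
    rintro _ ⟨m, hm, rfl⟩
    refine ⟨⟨monomial m 1, isHomogeneous_monomial _ ?_⟩, ?_⟩
    · rw [Finsupp.degree_eq_sum]
      exact mem_degreeExponents.1 hm
    · funext P
      simp [evalMap, monomialValues, eval_monomial, Finsupp.prod_fintype]

/-- The product of the values of a linear form and a form of degree `d` are the values of a form
of degree `d + 1`. -/
theorem mul_mem_range_evalMap_succ {n d : ℕ} {Z : Finset (ProjPt n)} {u v : { x // x ∈ Z } → ℂ}
    (hu : u ∈ LinearMap.range (evalMap n 1 Z)) (hv : v ∈ LinearMap.range (evalMap n d Z)) :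
    u * v ∈ LinearMap.range (evalMap n (d + 1) Z) := by
  obtain ⟨⟨F, hF⟩, rfl⟩ := hu
  obtain ⟨⟨G, hG⟩, rfl⟩ := hv
  refine ⟨⟨G * F, IsHomogeneous.mul hG hF⟩, ?_⟩
  funext P
  simp [evalMap, mul_comm]

theorem coord_mem_range_evalMap (n : ℕ) (Z : Finset (ProjPt n)) (i : Fin (n+1)) :
    (fun P : { x // x ∈ Z } => (P : ProjPt n).rep i) ∈ LinearMap.range (evalMap n 1 Z) :=
  ⟨⟨X i, isHomogeneous_X ℂ i⟩, by funext P; simp [evalMap]⟩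

/-- Some linear form vanishes at no point of `Z`. -/
theorem exists_mem_range_evalMap_one_ne_zero (n : ℕ) (Z : Finset (ProjPt n)) :
    ∃ l ∈ LinearMap.range (evalMap n 1 Z), ∀ P, l P ≠ 0 := by
  obtain ⟨φ, hφ⟩ := Module.exists_dual_forall_apply_ne_zero (K := ℂ)
    (fun P : { x // x ∈ Z } => (P : ProjPt n).rep) fun P => (P : ProjPt n).rep_nonzero
  refine ⟨fun P => φ (P : ProjPt n).rep, ?_, hφ⟩
  have : (fun P : { x // x ∈ Z } => φ (P : ProjPt n).rep) =
      ∑ i, φ (Pi.single i 1) • fun P : { x // x ∈ Z } => (P : ProjPt n).rep i := by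
    funext P
    conv_lhs => rw [pi_eq_sum_univ' (P : ProjPt n).rep]
    simp [mul_comm, Pi.single]
  rw [this]
  exact Submodule.sum_mem _ fun i _ => Submodule.smul_mem _ _ (coord_mem_range_evalMap n Z i)

/-- The values of the multiples by `l` of the forms of degree `d`. -/
noncomputable def mulRange (n d : ℕ) (Z : Finset (ProjPt n)) (l : { x // x ∈ Z } → ℂ) :
    Submodule ℂ ({ x // x ∈ Z } → ℂ) :=
  (LinearMap.range (evalMap n d Z)).map (LinearMap.mulLeft ℂ l)

theorem finrank_mulRange {n : ℕ} (d : ℕ) {Z : Finset (ProjPt n)} {l : { x // x ∈ Z } → ℂ}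
    (hl : ∀ P, l P ≠ 0) : Module.finrank ℂ (mulRange n d Z l) = hilb n Z d := by
  refine (Submodule.equivMapOfInjective (LinearMap.mulLeft ℂ l) (fun u v h => ?_) _).finrank_eq.symm
  funext P
  exact mul_left_cancel₀ (hl P) (congr_fun h P)

open Classical in
/-- The exponents of degree `d + 1` of the monomials that are, modulo `l`, not spanned by the
lexicographically smaller ones. -/
noncomputable def standardExponents (n d : ℕ) (Z : Finset (ProjPt n)) (l : { x // x ∈ Z } → ℂ) :
    Finset (Fin (n+1) →₀ ℕ) :=
  {m ∈ degreeExponents n (d + 1) | monomialValues n Z m ∉ mulRange n d Z l ⊔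
    Submodule.span ℂ (monomialValues n Z '' {k | k ∈ degreeExponents n (d + 1) ∧ toLex k < toLex m})}

theorem mem_degreeExponents_of_mem_standardExponents {n d : ℕ} {Z : Finset (ProjPt n)}
    {l : { x // x ∈ Z } → ℂ} {m : Fin (n+1) →₀ ℕ} (hm : m ∈ standardExponents n d Z l) :
    m ∈ degreeExponents n (d + 1) := by
  classical
  exact (Finset.mem_filter.1 hm).1

theorem hilb_succ_eq {n : ℕ} (d : ℕ) {Z : Finset (ProjPt n)} {l : { x // x ∈ Z } → ℂ}
    (hl1 : l ∈ LinearMap.range (evalMap n 1 Z)) (hl : ∀ P, l P ≠ 0) :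
    hilb n Z (d + 1) = hilb n Z d + (standardExponents n d Z l).card := by
  classical
  have h := finrank_sup_span_eq_add_card (toLex : (Fin (n+1) →₀ ℕ) → Lex (Fin (n+1) →₀ ℕ))
    toLex.injective (mulRange n d Z l) (monomialValues n Z) (degreeExponents n (d + 1))
  rw [← range_evalMap_eq_span, finrank_mulRange d hl, sup_eq_right.2] at h
  · exact h
  · rintro _ ⟨v, hv, rfl⟩
    exact mul_mem_range_evalMap_succ hl1 hv

/-- Divisors of standard monomials are standard. -/
theorem sub_single_mem_standardExponents {n d : ℕ} {Z : Finset (ProjPt n)}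
    {l : { x // x ∈ Z } → ℂ} {m : Fin (n+1) →₀ ℕ} (hm : m ∈ standardExponents n (d + 1) Z l)
    {i : Fin (n+1)} (hi : m i ≠ 0) :
    m - Finsupp.single i 1 ∈ standardExponents n d Z l := by
  classical
  obtain ⟨k, rfl⟩ : ∃ k, m = k + Finsupp.single i 1 :=
    ⟨m - Finsupp.single i 1,
      (tsub_add_cancel_of_le (by simpa using Nat.one_le_iff_ne_zero.2 hi)).symm⟩
  have hdeg : ∀ {e} {k' : Fin (n+1) →₀ ℕ},
      k' + Finsupp.single i 1 ∈ degreeExponents n (e + 1) ↔ k' ∈ degreeExponents n e := by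
    intro e k'
    simp [mem_degreeExponents, Finset.sum_add_distrib, Finsupp.single_apply]
  rw [add_tsub_cancel_right]
  simp only [standardExponents, Finset.mem_filter] at hm ⊢
  refine ⟨hdeg.1 hm.1, fun hk => hm.2 ?_⟩
  rw [monomialValues_add_single]
  have hmap := Submodule.mem_map_of_mem
    (f := LinearMap.mulLeft ℂ fun P : { x // x ∈ Z } => (P : ProjPt n).rep i) hk
  rw [Submodule.map_sup, Submodule.map_span, Set.image_image] at hmap
  have hle : ∀ {A A' B B' : Submodule ℂ ({ x // x ∈ Z } → ℂ)} {v}, v ∈ A ⊔ B → A ≤ A' → B ≤ B' →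
      v ∈ A' ⊔ B' := fun hv hA hB => sup_le_sup hA hB hv
  refine hle hmap ?_ (Submodule.span_mono ?_)
  · rintro _ ⟨_, ⟨v, hv, rfl⟩, rfl⟩
    refine ⟨_, mul_mem_range_evalMap_succ (coord_mem_range_evalMap n Z i) hv, ?_⟩
    simp only [LinearMap.mulLeft_apply]
    ring
  · rintro _ ⟨k', ⟨hk', hlt⟩, rfl⟩
    refine ⟨k' + Finsupp.single i 1, ⟨hdeg.2 hk', ?_⟩, monomialValues_add_single n Z k' i⟩
    exact add_lt_add_left hlt _

theorem dHilb_natCast_succ (n : ℕ) (Z : Finset (ProjPt n)) (d : ℕ) :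
    dHilb n Z ((d : ℤ) + 1) = hilb n Z (d + 1) - hilb n Z d := by
  have h1 : ¬ ((d : ℤ) + 1 < 0) := by omega
  have h2 : ¬ ((d : ℤ) < 0) := by omega
  have h3 : ((d : ℤ) + 1).toNat = d + 1 := by omega
  simp [dHilb, hilbZ, h1, h2, h3]

/-- Macaulay's maximal growth principle: if `Dh_Z(j) ≤ j` for some `j > 0`, then
`Dh_Z(j+1) ≤ Dh_Z(j)`.  In particular, if `Dh_Z(j) = 0` for some `j > 0`, then
`Dh_Z(i) = 0` for all `i ≥ j`. -/
theorem dHilb_maximal_growth (n : ℕ) (Z : Finset (ProjPt n)) (j : ℤ) (hj : 0 < j) :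
    (dHilb n Z j ≤ j → dHilb n Z (j + 1) ≤ dHilb n Z j) ∧
    (dHilb n Z j = 0 → ∀ i : ℤ, j ≤ i → dHilb n Z i = 0) := by
  obtain ⟨l, hl1, hl⟩ := exists_mem_range_evalMap_one_ne_zero n Z
  have hD : ∀ d : ℕ, dHilb n Z ((d : ℤ) + 1) = (standardExponents n d Z l).card := fun d => by
    rw [dHilb_natCast_succ, hilb_succ_eq d hl1 hl]
    push_cast
    ring
  have hgrowth : ∀ d : ℕ, (standardExponents n d Z l).card ≤ d + 1 →
      (standardExponents n (d + 1) Z l).card ≤ (standardExponents n d Z l).card := by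
    intro d hd
    by_contra! hlt
    obtain ⟨M, hM, hMcard⟩ := Finset.exists_subset_card_eq (Nat.succ_le_of_lt hlt)
    have := card_le_card_of_shadow_subset Finset.univ (d + 2) M (standardExponents n d Z l)
      (by simp)
      (fun m hm => mem_degreeExponents.1 (mem_degreeExponents_of_mem_standardExponents (hM hm)))
      (by omega)
      (fun m hm i _ hi => sub_single_mem_standardExponents (hM hm) hi)
    omega
  obtain ⟨d, rfl⟩ : ∃ d : ℕ, j = d + 1 := ⟨(j - 1).toNat, by omega⟩
  refine ⟨fun h => ?_, fun h i hi => ?_⟩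
  · have h' := hD (d + 1)
    push_cast at h'
    rw [hD] at h
    rw [h', hD]
    exact_mod_cast hgrowth d (by exact_mod_cast h)
  · obtain ⟨e, rfl⟩ : ∃ e : ℕ, i = (d + e : ℕ) + 1 := ⟨(i - (d + 1)).toNat, by omega⟩
    rw [hD] at h ⊢
    norm_cast at h ⊢
    induction e with
    | zero => exact h
    | succ e ih =>
      have ih := ih (by omega)
      have := hgrowth (d + e) (by omega)
      rw [← add_assoc]
      omega
end

section
/- If a finite set Z ⊂ ℙⁿ(ℂ) satisfies the Cayley–Bacharach property CB(i), then for every j with 0 ≤ j ≤ i+1 one has Dh_Z(0) + Dh_Z(1) + ⋯ + Dh_Z(j) ≤ Dh_Z(i+1−j) + ⋯ + Dh_Z(i+1). -/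
open MvPolynomial

/-- The Cayley–Bacharach property `CB(i)`: every form of degree `i` vanishing at all points
of `Z` but one also vanishes at the remaining point. -/
def CB (n : ℕ) (Z : Finset (ProjPt n)) (i : ℕ) : Prop :=
  ∀ P ∈ Z, ∀ F : MvPolynomial (Fin (n+1)) ℂ, F.IsHomogeneous i →
    (∀ Q ∈ Z, Q ≠ P → eval Q.rep F = 0) → eval P.rep F = 0

section Kneser

variable {K ι : Type*} [Field K]

open Classical in
/-- The indicator function of a class `q` of the equivalence relation `s`. -/
noncomputable def classIndicator (K : Type*) [Field K] {ι : Type*} (s : Setoid ι)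
    (q : Quotient s) : ι → K :=
  fun x => if Quotient.mk s x = q then 1 else 0

theorem classIndicator_mul_self (s : Setoid ι) (q : Quotient s) :
    classIndicator K s q * classIndicator K s q = classIndicator K s q := by
  funext x
  simp [classIndicator]

theorem classIndicator_mul_of_ne (s : Setoid ι) {q r : Quotient s} (h : q ≠ r) :
    classIndicator K s q * classIndicator K s r = 0 := by
  funext x
  by_cases hx : Quotient.mk s x = q
  · simp [classIndicator, hx, h]
  · simp [classIndicator, hx]

/-- `V` is stable under multiplication by functions constant on the classes of `s`. -/
def StableUnder (s : Setoid ι) (V : Submodule K (ι → K)) : Prop :=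
  ∀ q : Quotient s, ∀ v ∈ V, classIndicator K s q * v ∈ V

theorem StableUnder.mul_right {s : Setoid ι} {V : Submodule K (ι → K)} (h : StableUnder s V)
    (W : Submodule K (ι → K)) : StableUnder s (V * W) := by
  intro q v hv
  induction hv using Submodule.mul_induction_on' with
  | mem_mul_mem v hv w hw =>
    rw [← mul_assoc]
    exact Submodule.mul_mem_mul (h q v hv) hw
  | add x _ y _ hx hy =>
    rw [mul_add]
    exact add_mem hx hy

/-- Multiplication by a function without zeros does not change the dimension of a subspace. -/
theorem finrank_map_mulLeft_of_ne_zero {e : ι → K} (he : ∀ x, e x ≠ 0)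
    (V : Submodule K (ι → K)) :
    Module.finrank K (V.map (LinearMap.mulLeft K e)) = Module.finrank K V := by
  refine (Submodule.equivMapOfInjective _ ?_ V).finrank_eq.symm
  intro f g hfg
  funext x
  exact mul_left_cancel₀ (he x) (congrFun hfg x)

variable [Finite ι]

theorem exists_forall_add_ne_zero [Infinite K] (b : ι → K) : ∃ c : K, ∀ x, b x + c ≠ 0 := by
  obtain ⟨c, hc⟩ := (Set.finite_range fun x => -b x).exists_notMem
  refine ⟨c, fun x hx => hc ⟨x, ?_⟩⟩
  linear_combination -hx

/-- If `A * B ≤ B`, then `B` is stable under the equivalence relation whose classes are the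
fibres of `A`, and there are at least `dim A` such classes. -/
theorem exists_stableUnder_of_mul_le {A B : Submodule K (ι → K)} (h : A * B ≤ B) :
    ∃ s : Setoid ι, StableUnder s B ∧ Module.finrank K A ≤ Nat.card (Quotient s) := by
  classical
  have := Fintype.ofFinite ι
  let s : Setoid ι :=
    { r := fun x y => ∀ a ∈ A, a x = a y
      iseqv := ⟨fun _ _ _ => rfl, fun h a ha => (h a ha).symm,
        fun h h' a ha => (h a ha).trans (h' a ha)⟩ }
  have hs : ∀ x y, Quotient.mk s x = Quotient.mk s y ↔ ∀ a ∈ A, a x = a y :=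
    fun x y => Quotient.eq (r := s)
  refine ⟨s, ?_, ?_⟩
  · intro q
    induction q using Quotient.inductionOn with
    | h p =>
    have hsep : ∀ y, ∃ a ∈ A, Quotient.mk s y ≠ Quotient.mk s p → a p ≠ a y := by
      intro y
      by_cases hy : Quotient.mk s y = Quotient.mk s p
      · exact ⟨0, A.zero_mem, fun h => absurd hy h⟩
      · have hy' := hy
        rw [hs] at hy'
        push Not at hy'
        obtain ⟨a, ha, hne⟩ := hy'
        exact ⟨a, ha, fun _ => hne.symm⟩
    choose a ha hne using hsep
    let T : Finset ι := Finset.univ.filter fun y => Quotient.mk s y ≠ Quotient.mk s p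
    have hprod : ∀ U : Finset ι, ∀ v ∈ B, (∏ y ∈ U, (a y - a y y • (1 : ι → K))) * v ∈ B := by
      intro U
      induction U using Finset.induction_on with
      | empty => simp
      | insert y U hy ih =>
        intro v hv
        rw [Finset.prod_insert hy, mul_assoc, sub_mul, smul_mul_assoc, one_mul]
        exact sub_mem (h (Submodule.mul_mem_mul (ha y) (ih v hv))) (B.smul_mem _ (ih v hv))
    have hc : ∏ y ∈ T, (a y p - a y y) ≠ 0 := by
      refine Finset.prod_ne_zero_iff.2 fun y hy => sub_ne_zero.2 (hne y ?_)
      exact (Finset.mem_filter.1 hy).2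
    have hind : ∏ y ∈ T, (a y - a y y • (1 : ι → K)) =
        (∏ y ∈ T, (a y p - a y y)) • classIndicator K s (Quotient.mk s p) := by
      funext x
      by_cases hx : Quotient.mk s x = Quotient.mk s p
      · have hx' := (hs x p).1 hx
        simp [classIndicator, hx, Finset.prod_apply, fun y => hx' (a y) (ha y)]
      · have : ∏ y ∈ T, (a y x - a y y) = 0 :=
          Finset.prod_eq_zero (i := x) (by simp [T, hx]) (sub_self _)
        simp [classIndicator, hx, Finset.prod_apply, this]
    intro v hv
    have hmem := B.smul_mem (∏ y ∈ T, (a y p - a y y))⁻¹ (hprod T v hv)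
    rwa [hind, smul_mul_assoc, inv_smul_smul₀ hc] at hmem
  · have := Fintype.ofFinite (Quotient s)
    let f : A →ₗ[K] (Quotient s → K) := (LinearMap.funLeft K K Quotient.out).comp A.subtype
    have hf : Function.Injective f := by
      intro a b hab
      ext x
      have hout := (hs (Quotient.mk s x).out x).1 (Quotient.out_eq _)
      have hx := congrFun hab (Quotient.mk s x)
      simp only [f, LinearMap.comp_apply, LinearMap.funLeft_apply, Submodule.subtype_apply] at hx
      rwa [hout a a.2, hout b b.2] at hx
    simpa [Nat.card_eq_fintype_card] using LinearMap.finrank_le_finrank_of_injective hf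

/-- The transform step for Kneser's theorem in the algebra of functions on a finite set. -/
theorem exists_stableUnder_between [Infinite K] (A B : Submodule K (ι → K))
    (hA : (1 : ι → K) ∈ A) (hB : (1 : ι → K) ∈ B) :
    ∃ (V : Submodule K (ι → K)) (s : Setoid ι), B ≤ V ∧ V ≤ A * B ∧ StableUnder s V ∧
      Module.finrank K A + Module.finrank K B ≤ Module.finrank K V + Nat.card (Quotient s) := by
  induction hd : Module.finrank K A using Nat.strong_induction_on generalizing A B with
  | _ d ih =>
  have hBAB : B ≤ A * B := fun b hb => by simpa using Submodule.mul_mem_mul hA hb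
  by_cases hcase : ∃ e ∈ B, (∀ x, e x ≠ 0) ∧ ∃ a ∈ A, e * a ∉ B
  · obtain ⟨e, heB, he, a, haA, haB⟩ := hcase
    let A' := A ⊓ B.comap (LinearMap.mulLeft K e)
    let B' := B ⊔ A.map (LinearMap.mulLeft K e)
    have hlt : A' < A := lt_of_le_of_ne inf_le_left fun h =>
      haB (h.ge haA).2
    have hdim : Module.finrank K A' + Module.finrank K B' =
        Module.finrank K A + Module.finrank K B := by
      have hmap : A'.map (LinearMap.mulLeft K e) = B ⊓ A.map (LinearMap.mulLeft K e) := by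
        ext f
        constructor
        · rintro ⟨a, ha, rfl⟩
          exact ⟨ha.2, a, ha.1, rfl⟩
        · rintro ⟨hf, a, ha, rfl⟩
          exact ⟨a, ⟨ha, hf⟩, rfl⟩
      have h1 := finrank_map_mulLeft_of_ne_zero he A'
      have h2 := finrank_map_mulLeft_of_ne_zero he A
      have h3 := Submodule.finrank_sup_add_finrank_inf_eq B (A.map (LinearMap.mulLeft K e))
      rw [hmap] at h1
      change _ + Module.finrank K ↥(B ⊔ A.map (LinearMap.mulLeft K e)) = _
      omega
    obtain ⟨V, s, hBV, hV, hs, hle⟩ := ih _ (hd ▸ Submodule.finrank_lt_finrank_of_lt hlt) A' B'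
      ⟨hA, by simpa using heB⟩ (Submodule.mem_sup_left hB) rfl
    refine ⟨V, s, le_sup_left.trans hBV, hV.trans ?_, hs, by omega⟩
    rw [Submodule.mul_le]
    intro x hx y hy
    obtain ⟨b, hb, _, ⟨c, hc, rfl⟩, rfl⟩ := Submodule.mem_sup.1 hy
    rw [mul_add]
    refine add_mem (Submodule.mul_mem_mul hx.1 hb) ?_
    have hxc := Submodule.mul_mem_mul hc (show e * x ∈ B from hx.2)
    rwa [show c * (e * x) = x * (LinearMap.mulLeft K e) c by
      rw [LinearMap.mulLeft_apply]; ring] at hxc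
  · push Not at hcase
    have hAB : A * B ≤ B := by
      rw [Submodule.mul_le]
      intro a ha b hb
      obtain ⟨c, hc⟩ := exists_forall_add_ne_zero b
      have h1 := hcase (b + c • 1) (add_mem hb (B.smul_mem c hB)) (by simpa using hc) a ha
      have h2 := hcase 1 hB (by simp) a ha
      have h3 := sub_mem h1 (B.smul_mem c h2)
      rwa [show (b + c • 1) * a - c • (1 * a) = a * b by
        rw [add_mul, smul_mul_assoc]; ring] at h3
    obtain ⟨s, hs, hcard⟩ := exists_stableUnder_of_mul_le hAB
    exact ⟨B, s, le_rfl, hBAB, hs, by omega⟩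

/-- Kneser's theorem for subspaces of the algebra of functions on a finite set. -/
theorem exists_stableUnder_mul [Infinite K] [Nonempty ι] (A B : Submodule K (ι → K))
    (hA : (1 : ι → K) ∈ A) (hB : (1 : ι → K) ∈ B) :
    ∃ s : Setoid ι, StableUnder s (A * B) ∧
      Module.finrank K A + Module.finrank K B ≤
        Module.finrank K ↥(A * B) + Nat.card (Quotient s) := by
  let Good (s : Setoid ι) (x : ι → K) : Prop := ∃ V : Submodule K (ι → K),
    (∀ b ∈ B, x * b ∈ V) ∧ V ≤ A * B ∧ StableUnder s V ∧
      Module.finrank K A + Module.finrank K B ≤ Module.finrank K V + Nat.card (Quotient s)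
  have hgood : ∀ x ∈ A, (∀ i, x i ≠ 0) → ∃ s, Good s x := by
    intro x hxA hx
    have hxx : x * x⁻¹ = 1 := funext fun i => mul_inv_cancel₀ (hx i)
    have hx' : ∀ i, x⁻¹ i ≠ 0 := fun i => inv_ne_zero (hx i)
    obtain ⟨V, s, hBV, hV, hs, hle⟩ := exists_stableUnder_between
      (A.map (LinearMap.mulLeft K x⁻¹)) B ⟨x, hxA, by simpa [mul_comm] using hxx⟩ hB
    refine ⟨s, V.map (LinearMap.mulLeft K x), fun b hb => ⟨b, hBV hb, rfl⟩, ?_, ?_, ?_⟩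
    · rw [Submodule.map_le_iff_le_comap]
      refine hV.trans (Submodule.mul_le.2 ?_)
      rintro _ ⟨a, ha, rfl⟩ b hb
      have hab := Submodule.mul_mem_mul ha hb
      rw [Submodule.mem_comap, LinearMap.mulLeft_apply, LinearMap.mulLeft_apply]
      rwa [← mul_assoc, ← mul_assoc, hxx, one_mul]
    · rintro q _ ⟨v, hv, rfl⟩
      exact ⟨_, hs q v hv, by simp only [LinearMap.mulLeft_apply]; ring⟩
    · rwa [finrank_map_mulLeft_of_ne_zero hx, ← finrank_map_mulLeft_of_ne_zero hx' A]
  let p : Setoid ι ⊕ ι → Subspace K A := Sum.elim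
    (fun s => (Submodule.span K {x | x ∈ A ∧ Good s x}).comap A.subtype)
    (fun i => LinearMap.ker ((LinearMap.proj i).comp A.subtype))
  have : Finite (Setoid ι) := Finite.of_injective (fun s : Setoid ι => s.r)
    fun s t h => Setoid.ext fun x y => iff_of_eq (congrFun (congrFun h x) y)
  have hcover : ⋃ k, (p k : Set A) = Set.univ := by
    refine Set.eq_univ_of_forall fun x => Set.mem_iUnion.2 ?_
    by_cases hx : ∀ i, (x : ι → K) i ≠ 0
    · obtain ⟨s, hs⟩ := hgood x x.2 hx
      exact ⟨.inl s, Submodule.subset_span ⟨x.2, hs⟩⟩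
    · push Not at hx
      obtain ⟨i, hi⟩ := hx
      exact ⟨.inr i, hi⟩
  obtain ⟨k, hk⟩ := Subspace.exists_eq_top_of_iUnion_eq_univ hcover
  have hmem : ∀ x : A, x ∈ p k := fun x => hk ▸ Submodule.mem_top
  rcases k with s | i
  · have hspan : A ≤ Submodule.span K {x | x ∈ A ∧ Good s x} := fun x hx => hmem ⟨x, hx⟩
    refine ⟨s, ?_, ?_⟩
    · intro q v hv
      have hle : A * B ≤ (A * B).comap (LinearMap.mulLeft K (classIndicator K s q)) := by
        rw [Submodule.mul_le]
        intro a ha b hb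
        have ha' := hspan ha
        clear ha
        induction ha' using Submodule.span_induction with
        | mem x hx =>
          obtain ⟨V, hBV, hV, hs, -⟩ := hx.2
          exact hV (hs q _ (hBV b hb))
        | zero => simp
        | add x y _ _ hx hy =>
          rw [add_mul]
          exact add_mem hx hy
        | smul c x _ hx =>
          rw [smul_mul_assoc]
          exact Submodule.smul_mem _ c hx
      exact hle hv
    · have hne : {x | x ∈ A ∧ Good s x}.Nonempty := by
        by_contra hempty
        rw [Set.not_nonempty_iff_eq_empty] at hempty
        have h1 := hspan hA
        rw [hempty, Submodule.span_empty, Submodule.mem_bot] at h1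
        exact one_ne_zero h1
      obtain ⟨x, -, V, -, hV, -, hle⟩ := hne
      have := Submodule.finrank_mono hV
      omega
  · exact absurd (hmem ⟨1, hA⟩) (by simp [p])

end Kneser

section Powers

variable {K ι : Type*} [Field K] {W : Submodule K (ι → K)}

theorem one_mem_submodule_pow (h1 : (1 : ι → K) ∈ W) (k : ℕ) : (1 : ι → K) ∈ W ^ k := by
  simpa using Submodule.pow_mem_pow W h1 k

variable [Finite ι]

/-- If `W` contains the constants and separates points, some power of `W` contains a function
whose support is a given point. -/
theorem exists_mem_pow_support_eq_singleton (h1 : (1 : ι → K) ∈ W)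
    (hsep : ∀ x y, x ≠ y → ∃ w ∈ W, w x ≠ w y) (p : ι) :
    ∃ k, ∃ w ∈ W ^ k, w p ≠ 0 ∧ ∀ y, y ≠ p → w y = 0 := by
  classical
  have := Fintype.ofFinite ι
  have hpt : ∀ y, ∃ w ∈ W, w y = 0 ∧ (y ≠ p → w p ≠ 0) := by
    intro y
    by_cases hy : y = p
    · exact ⟨0, W.zero_mem, rfl, fun h => absurd hy h⟩
    · obtain ⟨w, hw, hne⟩ := hsep y p hy
      exact ⟨w - w y • 1, sub_mem hw (W.smul_mem _ h1), by simp,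
        fun _ => by simpa [sub_eq_zero] using hne.symm⟩
  choose w hw hzero hne using hpt
  have hprod : ∀ U : Finset ι, ∏ y ∈ U, w y ∈ W ^ U.card := by
    intro U
    induction U using Finset.induction_on with
    | empty => simpa using one_mem_submodule_pow h1 0
    | insert y U hy ih =>
      rw [Finset.prod_insert hy, Finset.card_insert_of_notMem hy, pow_succ']
      exact Submodule.mul_mem_mul (hw y) ih
  refine ⟨_, _, hprod (Finset.univ.erase p), ?_, fun y hy => ?_⟩
  · rw [Finset.prod_apply]
    exact Finset.prod_ne_zero_iff.2 fun y hy => hne y (Finset.ne_of_mem_erase hy)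
  · rw [Finset.prod_apply]
    exact Finset.prod_eq_zero (i := y) (by simp [hy]) (hzero y)

/-- If no function in `W ^ i` is supported at a single point and `W ^ i` is stable under `s`,
then passing from `W ^ i` to `W ^ (i + 1)` increases the dimension by at least the number of
classes of `s`. -/
theorem finrank_pow_add_card_le (h1 : (1 : ι → K) ∈ W)
    (hsep : ∀ x y, x ≠ y → ∃ w ∈ W, w x ≠ w y) {i : ℕ}
    (hCB : ∀ p, ∀ w ∈ W ^ i, (∀ y, y ≠ p → w y = 0) → w p = 0)
    {s : Setoid ι} (hs : StableUnder s (W ^ i)) :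
    Module.finrank K ↥(W ^ i) + Nat.card (Quotient s) ≤ Module.finrank K ↥(W ^ (i + 1)) := by
  have := Fintype.ofFinite (Quotient s)
  have hs' : StableUnder s (W ^ (i + 1)) := pow_succ W i ▸ hs.mul_right W
  have hle : W ^ i ≤ W ^ (i + 1) := fun w hw => by
    simpa [pow_succ] using Submodule.mul_mem_mul hw h1
  have hex : ∀ q : Quotient s, ∃ g ∈ W ^ (i + 1), classIndicator K s q * g ∉ W ^ i := by
    intro q
    by_contra! hq
    have hall : ∀ k, ∀ w ∈ W ^ (i + k), classIndicator K s q * w ∈ W ^ i := by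
      intro k
      induction k with
      | zero => exact hs q
      | succ k ih =>
        intro w hw
        rw [← add_assoc, pow_succ] at hw
        induction hw using Submodule.mul_induction_on' with
        | mem_mul_mem x hx y hy =>
          have hxy := hq _ (pow_succ W i ▸ Submodule.mul_mem_mul (ih x hx) hy)
          rwa [← mul_assoc, ← mul_assoc, classIndicator_mul_self, mul_assoc] at hxy
        | add x _ y _ hx hy =>
          rw [mul_add]
          exact add_mem hx hy
    induction q using Quotient.inductionOn with
    | h p =>
    obtain ⟨k, w, hw, hwp, hwy⟩ := exists_mem_pow_support_eq_singleton h1 hsep p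
    have hmem : w ∈ W ^ (i + k) := by
      simpa [pow_add] using Submodule.mul_mem_mul (one_mem_submodule_pow h1 i) hw
    refine hwp ?_
    simpa [classIndicator] using hCB p _ (hall k w hmem) fun y hy => by simp [hwy y hy]
  choose g hg hgn using hex
  let u : Quotient s → ↥(W ^ (i + 1)) := fun q => ⟨_, hs' q _ (hg q)⟩
  let f : (↥(W ^ i) × (Quotient s → K)) →ₗ[K] ↥(W ^ (i + 1)) :=
    (Submodule.inclusion hle).coprod (Fintype.linearCombination K u)
  have hf : Function.Injective f := by
    rw [← LinearMap.ker_eq_bot, LinearMap.ker_eq_bot']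
    rintro ⟨v, c⟩ hvc
    have hsum : (v : ι → K) + ∑ q, c q • (classIndicator K s q * g q) = 0 := by
      simpa [f, u, Fintype.linearCombination_apply] using congrArg Subtype.val hvc
    have hc : c = 0 := by
      funext q
      by_contra hcq
      have hmul := congrArg (classIndicator K s q * ·) hsum
      simp only [mul_add, Finset.mul_sum, mul_zero] at hmul
      rw [Finset.sum_eq_single q, mul_smul_comm, ← mul_assoc, classIndicator_mul_self] at hmul
      · refine hgn q ?_
        rw [← inv_smul_smul₀ hcq (classIndicator K s q * g q), eq_neg_of_add_eq_zero_right hmul]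
        exact Submodule.smul_mem _ _ (neg_mem (hs q v v.2))
      · intro r _ hr
        rw [mul_smul_comm, ← mul_assoc, classIndicator_mul_of_ne s hr.symm, zero_mul, smul_zero]
      · simp
    subst hc
    simpa using hsum
  simpa [Nat.card_eq_fintype_card] using LinearMap.finrank_le_finrank_of_injective hf

/-- The abstract Cayley–Bacharach inequality for powers of a space of functions. -/
theorem finrank_pow_add_finrank_pow_le [Infinite K] [Nonempty ι] (h1 : (1 : ι → K) ∈ W)
    (hsep : ∀ x y, x ≠ y → ∃ w ∈ W, w x ≠ w y) {a b : ℕ}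
    (hCB : ∀ p, ∀ w ∈ W ^ (a + b), (∀ y, y ≠ p → w y = 0) → w p = 0) :
    Module.finrank K ↥(W ^ a) + Module.finrank K ↥(W ^ b) ≤
      Module.finrank K ↥(W ^ (a + b + 1)) := by
  obtain ⟨s, hs, hle⟩ := exists_stableUnder_mul (W ^ a) (W ^ b) (one_mem_submodule_pow h1 a)
    (one_mem_submodule_pow h1 b)
  rw [← pow_add] at hs hle
  exact hle.trans (finrank_pow_add_card_le h1 hsep hCB hs)

end Powers

/-- There is a linear functional that vanishes at none of finitely many points. -/
theorem exists_dual_rep_ne_zero (n : ℕ) (Z : Finset (ProjPt n)) :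
    ∃ l : Module.Dual ℂ (Fin (n + 1) → ℂ), ∀ P : { x // x ∈ Z }, l (P : ProjPt n).rep ≠ 0 := by
  by_contra! h
  obtain ⟨P, hP⟩ := Subspace.exists_eq_top_of_iUnion_eq_univ
    (p := fun P : { x // x ∈ Z } =>
      LinearMap.ker (Module.Dual.eval ℂ (Fin (n + 1) → ℂ) (P : ProjPt n).rep))
    (Set.eq_univ_of_forall fun l => Set.mem_iUnion.2 (h l))
  refine (P : ProjPt n).rep_nonzero ((Module.forall_dual_apply_eq_zero_iff ℂ _).1 fun l => ?_)
  have : l ∈ LinearMap.ker (Module.Dual.eval ℂ (Fin (n + 1) → ℂ) (P : ProjPt n).rep) :=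
    hP ▸ Submodule.mem_top
  exact this

theorem eval_smul_of_isHomogeneous {σ R : Type*} [CommSemiring R] {F : MvPolynomial σ R} {d : ℕ}
    (hF : F.IsHomogeneous d) (c : R) (v : σ → R) : eval (c • v) F = c ^ d * eval v F := by
  rw [eval_eq, eval_eq, Finset.mul_sum]
  refine Finset.sum_congr rfl fun m hm => ?_
  rw [hF.degree_eq_sum_deg_support hm]
  simp only [Pi.smul_apply, smul_eq_mul, mul_pow, Finset.prod_mul_distrib,
    Finset.prod_pow_eq_pow_sum]
  ring

theorem hilb_add_hilb_le (n : ℕ) (Z : Finset (ProjPt n)) (a b : ℕ) (hCB : CB n Z (a + b)) :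
    hilb n Z a + hilb n Z b ≤ hilb n Z (a + b + 1) := by
  rcases isEmpty_or_nonempty { x // x ∈ Z } with hZ | hZ
  · have hzero : ∀ d, hilb n Z d = 0 := fun d => Module.finrank_zero_of_subsingleton
    simp [hzero]
  obtain ⟨l, hl⟩ := exists_dual_rep_ne_zero n Z
  let c : { x // x ∈ Z } → ℂ := fun P => (l (P : ProjPt n).rep)⁻¹
  have hc : ∀ P, c P ≠ 0 := fun P => inv_ne_zero (hl P)
  let ψ : MvPolynomial (Fin (n + 1)) ℂ →ₐ[ℂ] ({ x // x ∈ Z } → ℂ) :=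
    aeval fun k P => c P * (P : ProjPt n).rep k
  have hψ : ∀ F P, ψ F P = eval (c P • (P : ProjPt n).rep) F := by
    intro F P
    have := congrArg (fun φ => φ F) (comp_aeval (R := ℂ)
      (fun k (P : { x // x ∈ Z }) => c P * (P : ProjPt n).rep k)
      (Pi.evalAlgHom ℂ (fun _ : { x // x ∈ Z } => ℂ) P))
    simpa [aeval_eq_eval, ψ, Pi.smul_def] using this
  let W := (homogeneousSubmodule (Fin (n + 1)) ℂ 1).map ψ.toLinearMap
  have hW : ∀ d, W ^ d = (homogeneousSubmodule (Fin (n + 1)) ℂ d).map ψ.toLinearMap := by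
    intro d
    rw [← homogeneousSubmodule_one_pow, Submodule.map_pow]
  have hfin : ∀ d, hilb n Z d = Module.finrank ℂ ↥(W ^ d) := by
    intro d
    have hcd : ∀ P, (c ^ d) P ≠ 0 := fun P => pow_ne_zero d (hc P)
    rw [hilb, ← finrank_map_mulLeft_of_ne_zero hcd, hW]
    have heq : ∀ F : homogeneousSubmodule (Fin (n + 1)) ℂ d, c ^ d * evalMap n d Z F = ψ F := by
      intro F
      funext P
      rw [hψ, eval_smul_of_isHomogeneous F.2]
      rfl
    suffices h : (LinearMap.range (evalMap n d Z)).map (LinearMap.mulLeft ℂ (c ^ d)) =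
        (homogeneousSubmodule (Fin (n + 1)) ℂ d).map ψ.toLinearMap by rw [h]
    ext f
    constructor
    · rintro ⟨_, ⟨F, rfl⟩, rfl⟩
      exact ⟨F, F.2, (heq F).symm⟩
    · rintro ⟨F, hF, rfl⟩
      exact ⟨_, ⟨⟨F, hF⟩, rfl⟩, heq ⟨F, hF⟩⟩
  have hX : ∀ k, (fun P : { x // x ∈ Z } => c P * (P : ProjPt n).rep k) ∈ W := fun k =>
    ⟨X k, isHomogeneous_X ℂ k, by simp [ψ]⟩
  have h1 : (1 : { x // x ∈ Z } → ℂ) ∈ W := by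
    have hsum : (1 : { x // x ∈ Z } → ℂ) =
        ∑ k, l (Pi.single k 1) • fun P : { x // x ∈ Z } => c P * (P : ProjPt n).rep k := by
      funext P
      have hlP : l (P : ProjPt n).rep = ∑ k, (P : ProjPt n).rep k * l (Pi.single k 1) := by
        conv_lhs => rw [pi_eq_sum_univ' (P : ProjPt n).rep]
        simp [map_sum]
      have hone : c P * l (P : ProjPt n).rep = 1 := inv_mul_cancel₀ (hl P)
      rw [hlP, Finset.mul_sum] at hone
      simp only [Pi.one_apply, Finset.sum_apply, Pi.smul_apply, smul_eq_mul]
      refine hone.symm.trans ?_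
      exact Finset.sum_congr rfl fun k _ => by ring
    rw [hsum]
    exact Submodule.sum_mem _ fun k _ => W.smul_mem _ (hX k)
  have hsep : ∀ P Q : { x // x ∈ Z }, P ≠ Q → ∃ w ∈ W, w P ≠ w Q := by
    intro P Q hPQ
    by_contra! h
    refine hPQ (Subtype.ext ?_)
    rw [← (P : ProjPt n).mk_rep, ← (Q : ProjPt n).mk_rep, Projectivization.mk_eq_mk_iff']
    refine ⟨(c P)⁻¹ * c Q, ?_⟩
    funext k
    have hk := h _ (hX k)
    rw [Pi.smul_apply, smul_eq_mul, mul_assoc, ← hk, inv_mul_cancel_left₀ (hc P)]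
  rw [hfin, hfin, hfin]
  refine finrank_pow_add_finrank_pow_le h1 hsep fun P w hw hwQ => ?_
  rw [hW] at hw
  obtain ⟨F, hF, rfl⟩ := hw
  have hval : ∀ Q, ψ F Q = c Q ^ (a + b) * eval (Q : ProjPt n).rep F := fun Q => by
    rw [hψ, eval_smul_of_isHomogeneous hF]
  have hP := hCB P P.2 F hF fun Q hQ hne => by
    have hQ0 : ψ F ⟨Q, hQ⟩ = 0 := hwQ ⟨Q, hQ⟩ fun h => hne (congrArg Subtype.val h)
    rw [hval] at hQ0
    exact (mul_eq_zero.1 hQ0).resolve_left (pow_ne_zero _ (hc _))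
  change ψ F P = 0
  rw [hval, hP, mul_zero]

theorem sum_range_dHilb (n : ℕ) (Z : Finset (ProjPt n)) (m k : ℕ) :
    ∑ t ∈ Finset.range k, dHilb n Z ((m + t : ℕ) : ℤ) =
      hilbZ n Z ((m : ℤ) + k - 1) - hilbZ n Z ((m : ℤ) - 1) := by
  induction k with
  | zero => simp
  | succ k ih =>
    rw [Finset.sum_range_succ, ih, dHilb]
    push_cast
    rw [show (m : ℤ) + (k + 1) - 1 = m + k by ring]
    ring

/-- If a finite set `Z ⊂ ℙⁿ(ℂ)` satisfies `CB(i)`, then for every `0 ≤ j ≤ i+1`: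
`Dh_Z(0) + ⋯ + Dh_Z(j) ≤ Dh_Z(i+1-j) + ⋯ + Dh_Z(i+1)`. -/
theorem cb_dHilb_inequality (n : ℕ) (Z : Finset (ProjPt n)) (i : ℕ) (hCB : CB n Z i)
    (j : ℕ) (hj : j ≤ i + 1) :
    ∑ t ∈ Finset.range (j + 1), dHilb n Z (t : ℤ) ≤
      ∑ t ∈ Finset.range (j + 1), dHilb n Z ((i + 1 - j + t : ℕ) : ℤ) := by
  have hleft := sum_range_dHilb n Z 0 (j + 1)
  simp only [zero_add] at hleft
  have hneg : hilbZ n Z (((0 : ℕ) : ℤ) - 1) = 0 := by simp [hilbZ]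
  have hnat : ∀ d : ℕ, hilbZ n Z d = hilb n Z d := fun d => by simp [hilbZ]
  rw [hleft, sum_range_dHilb, hneg,
    show ((0 : ℕ) : ℤ) + (j + 1 : ℕ) - 1 = j by push_cast; ring,
    show ((i + 1 - j : ℕ) : ℤ) + (j + 1 : ℕ) - 1 = (i + 1 : ℕ) by omega]
  rcases hj.eq_or_lt with rfl | hlt
  · rw [Nat.sub_self, hneg]
  · obtain ⟨k, rfl⟩ := Nat.exists_eq_add_of_le (Nat.lt_succ_iff.1 hlt)
    rw [show ((j + k + 1 - j : ℕ) : ℤ) - 1 = k by omega, hnat, hnat, hnat]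
    have := hilb_add_hilb_le n Z j k hCB
    omega
end

section
/- Let Z ⊂ ℙⁿ(ℂ) be a finite set with Kruskal rank k. If ℓ(Z) ≤ 2k − 1, then Z is separated by forms of degree 2, i.e. h_Z(2) = ℓ(Z); equivalently, for every point P ∈ Z there is a quadric (homogeneous polynomial of degree 2) vanishing at all points of Z∖{P} and not vanishing at P. -/
open MvPolynomial

/-- The Kruskal rank of a finite set `Z ⊂ ℙⁿ(ℂ)`: the maximum `k` (necessarily `≤ ℓ(Z)`)
such that every subset of `Z` of cardinality `≤ k` is linearly independent. -/
noncomputable def kruskalRank (n : ℕ) (Z : Finset (ProjPt n)) : ℕ :=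
  sSup {k | k ≤ Z.card ∧ ∀ S ⊆ Z, S.card ≤ k →
    LinearIndependent ℂ (fun P : { x // x ∈ S } => (P : ProjPt n).rep)}

theorem isHomogeneous_linForm (n : ℕ) (v : Fin (n+1) → ℂ) : (linForm n v).IsHomogeneous 1 :=
  IsHomogeneous.sum _ _ _ fun i _ => isHomogeneous_C_mul_X (v i) i

theorem eval_linForm (n : ℕ) (f : (Fin (n+1) → ℂ) →ₗ[ℂ] ℂ) (x : Fin (n+1) → ℂ) :
    eval x (linForm n fun i => f (Pi.single i 1)) = f x := by
  have h := LinearMap.pi_apply_eq_sum_univ f x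
  simp only [linForm, map_sum, map_mul, eval_C, eval_X]
  rw [h]
  refine Finset.sum_congr rfl fun i _ => ?_
  rw [smul_eq_mul, mul_comm]
  congr 2
  ext j
  simp [Pi.single_apply, eq_comm]

/-- The supremum defining the Kruskal rank is attained. -/
theorem linearIndependent_of_card_le_kruskalRank (n : ℕ) (Z S : Finset (ProjPt n)) (hS : S ⊆ Z)
    (hcard : S.card ≤ kruskalRank n Z) :
    LinearIndependent ℂ (fun P : { x // x ∈ S } => (P : ProjPt n).rep) := by
  have hmem : kruskalRank n Z ∈ {k | k ≤ Z.card ∧ ∀ S ⊆ Z, S.card ≤ k →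
      LinearIndependent ℂ (fun P : { x // x ∈ S } => (P : ProjPt n).rep)} := by
    refine Nat.sSup_mem ⟨0, Nat.zero_le _, fun T _ hT => ?_⟩ ⟨Z.card, fun k hk => hk.1⟩
    obtain rfl : T = ∅ := Finset.card_eq_zero.mp (Nat.le_zero.mp hT)
    exact linearIndependent_empty_type
  exact hmem.2 S hS hcard

/-- A point is separated by a linear form from fewer than `kruskalRank n Z` other points. -/
theorem exists_linForm_separating (n : ℕ) (Z A : Finset (ProjPt n)) (hA : A ⊆ Z)
    (P : ProjPt n) (hP : P ∈ Z) (hPA : P ∉ A) (hcard : A.card < kruskalRank n Z) :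
    ∃ v : Fin (n+1) → ℂ, (∀ Q ∈ A, eval Q.rep (linForm n v) = 0) ∧
      eval P.rep (linForm n v) ≠ 0 := by
  classical
  have hli := linearIndependent_of_card_le_kruskalRank n Z (insert P A)
    (Finset.insert_subset hP hA) (by rw [Finset.card_insert_of_notMem hPA]; exact hcard)
  have hnot := hli.notMem_span_image (s := {Q | (Q : ProjPt n) ∈ A})
    (x := ⟨P, Finset.mem_insert_self P A⟩) hPA
  obtain ⟨f, hfP, hf⟩ := Submodule.exists_le_ker_of_notMem hnot
  refine ⟨fun i => f (Pi.single i 1), fun Q hQ => ?_, ?_⟩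
  · rw [eval_linForm]
    exact hf (Submodule.subset_span ⟨⟨Q, Finset.mem_insert_of_mem hQ⟩, hQ, rfl⟩)
  · rwa [eval_linForm]

theorem exists_quadric_separating (n : ℕ) (Z : Finset (ProjPt n))
    (hcard : Z.card ≤ 2 * kruskalRank n Z - 1) (P : ProjPt n) (hP : P ∈ Z) :
    ∃ F : MvPolynomial (Fin (n+1)) ℂ, F.IsHomogeneous 2 ∧
      (∀ Q ∈ Z, Q ≠ P → eval Q.rep F = 0) ∧ eval P.rep F ≠ 0 := by
  classical
  have hpos : 0 < Z.card := Finset.card_pos.mpr ⟨P, hP⟩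
  have herase := Finset.card_erase_of_mem hP
  obtain ⟨A, hA, hAcard⟩ := Finset.exists_subset_card_eq
    (show min (kruskalRank n Z - 1) (Z.erase P).card ≤ (Z.erase P).card from min_le_right _ _)
  have hBcard := Finset.card_sdiff_of_subset hA
  obtain ⟨v, hv, hvP⟩ := exists_linForm_separating n Z A
    (hA.trans (Finset.erase_subset P Z)) P hP
    (fun h => Finset.notMem_erase P Z (hA h)) (by omega)
  obtain ⟨w, hw, hwP⟩ := exists_linForm_separating n Z (Z.erase P \ A)
    (Finset.sdiff_subset.trans (Finset.erase_subset P Z)) P hP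
    (fun h => Finset.notMem_erase P Z (Finset.sdiff_subset h)) (by omega)
  refine ⟨linForm n v * linForm n w,
    (isHomogeneous_linForm n v).mul (isHomogeneous_linForm n w), fun Q hQ hQP => ?_, ?_⟩
  · rw [map_mul]
    by_cases hQA : Q ∈ A
    · rw [hv Q hQA, zero_mul]
    · rw [hw Q (Finset.mem_sdiff.mpr ⟨Finset.mem_erase.mpr ⟨hQP, hQ⟩, hQA⟩), mul_zero]
  · rw [map_mul]
    exact mul_ne_zero hvP hwP

/-- If forms of degree `d` separate the points of `Z`, then the evaluation map is onto. -/
theorem hilb_eq_card_of_separated (n d : ℕ) (Z : Finset (ProjPt n))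
    (hsep : ∀ P ∈ Z, ∃ F : MvPolynomial (Fin (n+1)) ℂ, F.IsHomogeneous d ∧
      (∀ Q ∈ Z, Q ≠ P → eval Q.rep F = 0) ∧ eval P.rep F ≠ 0) :
    hilb n Z d = Z.card := by
  classical
  have hrange : LinearMap.range (evalMap n d Z) = ⊤ := by
    rw [eq_top_iff, ← (Pi.basisFun ℂ { x // x ∈ Z }).span_eq, Submodule.span_le]
    rintro _ ⟨P, rfl⟩
    obtain ⟨F, hF, hFQ, hFP⟩ := hsep P P.2
    refine ⟨(eval (P : ProjPt n).rep F)⁻¹ • ⟨F, hF⟩, ?_⟩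
    ext Q
    rw [map_smul, Pi.smul_apply, smul_eq_mul, Pi.basisFun_apply]
    change _ * eval (Q : ProjPt n).rep F = _
    by_cases hQP : Q = P
    · subst hQP
      rw [inv_mul_cancel₀ hFP, Pi.single_eq_same]
    · rw [hFQ Q Q.2 fun h => hQP (Subtype.ext h), mul_zero, Pi.single_eq_of_ne hQP]
  rw [hilb, hrange, finrank_top, Module.finrank_fintype_fun_eq_card, Fintype.card_coe]

/-- If `Z ⊂ ℙⁿ(ℂ)` has Kruskal rank `k` and `ℓ(Z) ≤ 2k - 1`, then `Z` is separated by
forms of degree `2`: `h_Z(2) = ℓ(Z)`, and for every `P ∈ Z` there is a quadric vanishing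
at all points of `Z ∖ {P}` and not at `P`. -/
theorem separated_by_quadrics_of_card_le (n : ℕ) (Z : Finset (ProjPt n))
    (hcard : Z.card ≤ 2 * kruskalRank n Z - 1) :
    hilb n Z 2 = Z.card ∧
    ∀ P ∈ Z, ∃ F : MvPolynomial (Fin (n+1)) ℂ, F.IsHomogeneous 2 ∧
      (∀ Q ∈ Z, Q ≠ P → eval Q.rep F = 0) ∧ eval P.rep F ≠ 0 := by
  have hsep := exists_quadric_separating n Z hcard
  exact ⟨hilb_eq_card_of_separated n 2 Z hsep, hsep⟩
end

section
/- Let T ∈ ℙ(Symᵈ(ℂⁿ⁺¹)) and let A, B ⊂ ℙⁿ be two different minimal decompositions of T. Then the set Z = A ∪ B satisfies h_Z(d) < ℓ(Z), and consequently Dh_Z(d+1) > 0. -/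
open MvPolynomial

/-- `A ⊂ ℙⁿ` is a decomposition of (the class of) `T ∈ Symᵈ(ℂⁿ⁺¹)` if `T` belongs to the
linear span of the `d`-th powers `L_Pᵈ` of coordinate linear forms of the points `P ∈ A`,
i.e. the class of `T` lies in the projective span `⟨ν_d(A)⟩`. -/
def IsDecomp (n d : ℕ) (T : MvPolynomial (Fin (n+1)) ℂ) (A : Finset (ProjPt n)) : Prop :=
  T ∈ Submodule.span ℂ ((fun P : ProjPt n => (linForm n P.rep) ^ d) '' (A : Set (ProjPt n)))

/-- A decomposition is minimal if no proper subset is a decomposition. -/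
def IsMinimalDecomp (n d : ℕ) (T : MvPolynomial (Fin (n+1)) ℂ)
    (A : Finset (ProjPt n)) : Prop :=
  IsDecomp n d T A ∧ ∀ A' ⊂ A, ¬ IsDecomp n d T A'

theorem linForm_isHomogeneous (n : ℕ) (a : Fin (n+1) → ℂ) : (linForm n a).IsHomogeneous 1 :=
  IsHomogeneous.sum _ _ _ fun i _ => by
    simpa using (isHomogeneous_C (Fin (n+1)) (a i)).mul (isHomogeneous_X ℂ i)

/-- Every linear functional on `ℂⁿ⁺¹` is evaluation of a linear form. -/
theorem exists_eval_linForm_eq (n : ℕ) (f : Module.Dual ℂ (Fin (n+1) → ℂ)) :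
    ∃ a, ∀ v, eval v (linForm n a) = f v := by
  refine ⟨fun i => f (Pi.single i 1), fun v => ?_⟩
  conv_rhs => rw [pi_eq_sum_univ' v]
  simp [linForm, mul_comm]

theorem exists_linForm_forall_ne_zero (n : ℕ) (Z : Finset (ProjPt n)) :
    ∃ a, ∀ P : { x // x ∈ Z }, eval (P : ProjPt n).rep (linForm n a) ≠ 0 := by
  obtain ⟨f, hf⟩ := Module.exists_dual_forall_apply_ne_zero (K := ℂ)
    (fun P : { x // x ∈ Z } => (P : ProjPt n).rep) fun P => P.1.rep_nonzero
  obtain ⟨a, ha⟩ := exists_eval_linForm_eq n f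
  exact ⟨a, fun P => by rw [ha]; exact hf P⟩

theorem exists_linForm_separating_s9 (n : ℕ) {P Q : ProjPt n} (hPQ : P ≠ Q) :
    ∃ a, eval P.rep (linForm n a) ≠ 0 ∧ eval Q.rep (linForm n a) = 0 := by
  have hP : P.rep ∉ Submodule.span ℂ {Q.rep} := fun h => hPQ <| by
    rw [← P.mk_rep, ← Q.mk_rep, Projectivization.mk_eq_mk_iff']
    exact Submodule.mem_span_singleton.mp h
  obtain ⟨f, hf, hker⟩ := Submodule.exists_le_ker_of_notMem hP
  obtain ⟨a, ha⟩ := exists_eval_linForm_eq n f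
  refine ⟨a, by rwa [ha], ?_⟩
  rw [ha]
  exact hker (Submodule.mem_span_singleton_self _)

/-- Coordinatewise multiplication by the values of a linear form maps the image of evaluation in
degree `d` into the image of evaluation in degree `d + 1`. -/
theorem mul_eval_linForm_mem_range (n d : ℕ) (Z : Finset (ProjPt n)) (a : Fin (n+1) → ℂ)
    {w : { x // x ∈ Z } → ℂ} (hw : w ∈ LinearMap.range (evalMap n d Z)) :
    (fun P : { x // x ∈ Z } => eval (P : ProjPt n).rep (linForm n a)) * w ∈
      LinearMap.range (evalMap n (d + 1) Z) := by
  obtain ⟨F, rfl⟩ := hw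
  refine ⟨⟨linForm n a * F, ?_⟩, ?_⟩
  · rw [mem_homogeneousSubmodule, add_comm d]
    exact (linForm_isHomogeneous n a).mul F.2
  · funext P
    simp [evalMap]

/-- If the Hilbert function does not increase from `d` to `d + 1`, then evaluation in degree `d`
is surjective. -/
theorem range_evalMap_eq_top_of_hilb_succ_le (n d : ℕ) (Z : Finset (ProjPt n))
    (h : hilb n Z (d + 1) ≤ hilb n Z d) : LinearMap.range (evalMap n d Z) = ⊤ := by
  classical
  obtain ⟨a, ha⟩ := exists_linForm_forall_ne_zero n Z
  set l : { x // x ∈ Z } → ℂ := fun P => eval (P : ProjPt n).rep (linForm n a)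
  set W := LinearMap.range (evalMap n d Z)
  have hinj : Function.Injective (LinearMap.mulLeft ℂ l) := fun x y hxy => by
    funext P
    exact mul_left_cancel₀ (ha P) (congrFun hxy P)
  have hmap : W.map (LinearMap.mulLeft ℂ l) = LinearMap.range (evalMap n (d + 1) Z) := by
    refine Submodule.eq_of_le_of_finrank_le ?_ ?_
    · rintro _ ⟨w, hw, rfl⟩
      exact mul_eval_linForm_mem_range n d Z a hw
    · rwa [← (W.equivMapOfInjective _ hinj).finrank_eq]
  have hvanish (P : { x // x ∈ Z }) (S : Finset { x // x ∈ Z }) (hS : P ∉ S) :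
      ∃ w ∈ W, w P ≠ 0 ∧ ∀ Q ∈ S, w Q = 0 := by
    induction S using Finset.induction_on with
    | empty =>
      refine ⟨_, ⟨⟨linForm n a ^ d, ?_⟩, rfl⟩, ?_, by simp⟩
      · simpa using (linForm_isHomogeneous n a).pow d
      · simpa [evalMap] using fun h0 => absurd h0 (ha P)
    | insert Q S _ ih =>
      rw [Finset.mem_insert, not_or] at hS
      obtain ⟨w, hw, hwP, hwS⟩ := ih hS.2
      obtain ⟨b, hbP, hbQ⟩ := exists_linForm_separating_s9 n (Subtype.coe_ne_coe.mpr hS.1)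
      have hmem := mul_eval_linForm_mem_range n d Z b hw
      rw [← hmap] at hmem
      obtain ⟨u, hu, hue⟩ := hmem
      have hval (R) : l R * u R = eval (R : ProjPt n).rep (linForm n b) * w R := congrFun hue R
      refine ⟨u, hu, fun h0 => ?_, fun R hR => ?_⟩
      · have := hval P
        simp_all
      · refine (mul_eq_zero.mp ?_).resolve_left (ha R)
        refine (hval R).trans ?_
        rcases Finset.mem_insert.mp hR with rfl | hR
        · rw [hbQ, zero_mul]
        · rw [hwS R hR, mul_zero]
  rw [eq_top_iff, ← (Pi.basisFun ℂ { x // x ∈ Z }).span_eq, Submodule.span_le]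
  rintro _ ⟨P, rfl⟩
  obtain ⟨w, hw, hwP, hw0⟩ := hvanish P (Finset.univ.erase P) (by simp)
  have : Pi.single P 1 = (w P)⁻¹ • w := by
    funext Q
    by_cases hQ : Q = P
    · subst hQ
      simp [hwP]
    · simp [hQ, hw0 Q (by simp [hQ])]
  rw [Pi.basisFun_apply, this]
  exact W.smul_mem _ hw

/-- A linear relation among `d`-th powers of linear forms holds between the evaluations of
degree-`d` forms at the corresponding points. -/
theorem sum_mul_eval_eq_zero_of_sum_smul_linForm_pow {ι : Type*} (n d : ℕ) (s : Finset ι)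
    (c : ι → ℂ) (v : ι → Fin (n+1) → ℂ) (h : ∑ i ∈ s, c i • linForm n (v i) ^ d = 0)
    {F : MvPolynomial (Fin (n+1)) ℂ} (hF : F.IsHomogeneous d) :
    ∑ i ∈ s, c i * eval (v i) F = 0 := by
  have hmono (α : Fin (n+1) →₀ ℕ) (hα : α.sum (fun _ m => m) = d) :
      ∑ i ∈ s, c i * ∏ j, v i j ^ α j = 0 := by
    have hcoeff := congrArg (coeff α) h
    simp only [linForm, ← smul_eq_C_mul, coeff_sum, coeff_smul,
      coeff_linearCombination_X_pow_of_fintype, if_pos hα, coeff_zero, smul_eq_mul] at hcoeff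
    have hne : (α.multinomial : ℂ) ≠ 0 := Nat.cast_ne_zero.mpr (Nat.multinomial_pos _ _).ne'
    refine (mul_eq_zero.mp ?_).resolve_left hne
    rw [← hcoeff, Finset.mul_sum]
    refine Finset.sum_congr rfl fun i _ => ?_
    rw [Finsupp.prod_fintype _ _ fun _ => pow_zero _]
    ring
  simp only [eval_eq', Finset.mul_sum]
  rw [Finset.sum_comm]
  refine Finset.sum_eq_zero fun α hα => ?_
  have hdeg : α.sum (fun _ m => m) = d := by
    simpa [Finsupp.weight_apply] using hF (mem_support_iff.mp hα)
  rw [← mul_zero (coeff α F), ← hmono α hdeg, Finset.mul_sum]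
  exact Finset.sum_congr rfl fun i _ => by ring

theorem linearIndepOn_linForm_pow (n d : ℕ) (Z : Finset (ProjPt n))
    (h : LinearMap.range (evalMap n d Z) = ⊤) :
    LinearIndepOn ℂ (fun P : ProjPt n => linForm n P.rep ^ d) (Z : Set (ProjPt n)) := by
  classical
  rw [linearIndepOn_finset_iff]
  intro c hc P hP
  obtain ⟨F, hF⟩ := LinearMap.range_eq_top.mp h (Pi.single ⟨P, hP⟩ 1)
  have hsum := sum_mul_eval_eq_zero_of_sum_smul_linForm_pow n d Z c (fun P => P.rep) hc F.2
  have hval (Q) (hQ : Q ∈ Z) : eval Q.rep (F : MvPolynomial (Fin (n+1)) ℂ) =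
      (Pi.single ⟨P, hP⟩ 1 : { x // x ∈ Z } → ℂ) ⟨Q, hQ⟩ := congrFun hF ⟨Q, hQ⟩
  rw [Finset.sum_eq_single_of_mem P hP fun Q hQ hQP => ?_, hval P hP] at hsum
  · simpa using hsum
  · rw [hval Q hQ, Pi.single_eq_of_ne (by simpa using hQP), mul_zero]

/-- If the `d`-th powers at the points of `A ∪ B` are linearly independent, then decompositions
on `A` and on `B` restrict to a decomposition on `A ∩ B`. -/
theorem IsDecomp.inter {n d : ℕ} [DecidableEq (ProjPt n)] {T : MvPolynomial (Fin (n+1)) ℂ}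
    {A B : Finset (ProjPt n)} (hA : IsDecomp n d T A) (hB : IsDecomp n d T B)
    (h : LinearIndepOn ℂ (fun P : ProjPt n => linForm n P.rep ^ d)
      ((A ∪ B : Finset (ProjPt n)) : Set (ProjPt n))) : IsDecomp n d T (A ∩ B) := by
  unfold IsDecomp at *
  rw [Finsupp.mem_span_image_iff_linearCombination] at *
  obtain ⟨f, hf, hfT⟩ := hA
  obtain ⟨g, hg, hgT⟩ := hB
  have hfg : f = g := linearIndepOn_iffₛ.mp h
    f (Finsupp.supported_mono (by simp) hf) g (Finsupp.supported_mono (by simp) hg)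
    (hfT.trans hgT.symm)
  subst hfg
  refine ⟨f, ?_, hfT⟩
  rw [Finset.coe_inter]
  exact Set.subset_inter hf hg

theorem range_evalMap_union_ne_top {n d : ℕ} [DecidableEq (ProjPt n)]
    {T : MvPolynomial (Fin (n+1)) ℂ} {A B : Finset (ProjPt n)} (hA : IsMinimalDecomp n d T A)
    (hB : IsMinimalDecomp n d T B) (hAB : A ≠ B) :
    LinearMap.range (evalMap n d (A ∪ B)) ≠ ⊤ := fun h => by
  have hinter := hA.1.inter hB.1 (linearIndepOn_linForm_pow n d _ h)
  have hAsub : A ∩ B = A := by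
    by_contra hne
    exact hA.2 _ (Finset.inter_subset_left.ssubset_of_ne hne) hinter
  have hBsub : A ∩ B = B := by
    by_contra hne
    exact hB.2 _ (Finset.inter_subset_right.ssubset_of_ne hne) hinter
  exact hAB (hAsub.symm.trans hBsub)

/-- If `A ≠ B` are two minimal decompositions of `T ∈ ℙ(Symᵈ(ℂⁿ⁺¹))`, then `Z = A ∪ B`
satisfies `h_Z(d) < ℓ(Z)`, and consequently `Dh_Z(d+1) > 0`. -/
theorem two_minimal_decomps_hilb_lt (n d : ℕ) [DecidableEq (ProjPt n)]
    (T : MvPolynomial (Fin (n+1)) ℂ) (hT : T ≠ 0)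
    (A B : Finset (ProjPt n)) (hA : IsMinimalDecomp n d T A) (hB : IsMinimalDecomp n d T B)
    (hAB : A ≠ B) :
    hilb n (A ∪ B) d < (A ∪ B).card ∧ 0 < dHilb n (A ∪ B) ((d : ℤ) + 1) := by
  have hne := range_evalMap_union_ne_top hA hB hAB
  constructor
  · simpa [hilb] using Submodule.finrank_lt hne
  · have hlt : hilb n (A ∪ B) d < hilb n (A ∪ B) (d + 1) :=
      lt_of_not_ge fun h => hne (range_evalMap_eq_top_of_hilb_succ_le n d _ h)
    have hd : ¬ ((d : ℤ) + 1 < 0) := by omega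
    have hd' : ¬ ((d : ℤ) < 0) := by omega
    have hnat : ((d : ℤ) + 1).toNat = d + 1 := by omega
    simp only [dHilb, hilbZ, add_sub_cancel_right, if_neg hd, if_neg hd', hnat, Int.toNat_natCast]
    omega
end

section
/- Fix a form T ∈ ℙ(Symᵈ(ℂⁿ⁺¹)) and a minimal decomposition A ⊂ ℙⁿ of T. Assume that ℓ(A) ≤ d and that A contains no aligned subset (subset of points lying on a projective line) of cardinality d/2. Then T has rank ℓ(A) and is identifiable: every decomposition B of T with ℓ(B) ≤ ℓ(A) equals A. -/
open MvPolynomial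

/-- A derivation of polynomials that contracts with a linear functional lowers the degree of a
linear relation between powers of linear forms. -/
theorem sum_smul_linForm_pow_of_succ {n d : ℕ} {S : Finset (ProjPt n)} {c : ProjPt n → ℂ}
    (h : ∑ P ∈ S, c P • linForm n P.rep ^ (d + 1) = 0)
    (f : Module.Dual ℂ (Fin (n + 1) → ℂ)) :
    ∑ P ∈ S with f P.rep ≠ 0, (c P * f P.rep) • linForm n P.rep ^ d = 0 := by
  let D : Derivation ℂ (MvPolynomial (Fin (n + 1)) ℂ) (MvPolynomial (Fin (n + 1)) ℂ) :=
    mkDerivation ℂ fun i => C (f (Pi.single i 1))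
  have hD (v : Fin (n + 1) → ℂ) : D (linForm n v) = C (f v) := by
    conv_rhs => rw [pi_eq_sum_univ' v]
    simp only [linForm, map_sum, ← smul_eq_C_mul, map_smul, smul_eq_mul, map_mul]
    refine Finset.sum_congr rfl fun i _ => ?_
    rw [D.map_smul, mkDerivation_X]
  have hsum : ((d : ℂ) + 1) • ∑ P ∈ S, (c P * f P.rep) • linForm n P.rep ^ d = 0 := by
    have := congrArg D h
    rw [map_sum, map_zero] at this
    rw [← this, Finset.smul_sum]
    refine Finset.sum_congr rfl fun P _ => ?_
    rw [D.map_smul, D.leibniz_pow, hD]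
    simp only [smul_eq_C_mul, smul_eq_mul, nsmul_eq_mul, map_mul, map_add, map_one,
      map_natCast, Nat.cast_add, Nat.cast_one, Nat.add_sub_cancel]
    ring
  have hne : (d : ℂ) + 1 ≠ 0 := by exact_mod_cast d.succ_ne_zero
  rw [Finset.sum_filter_of_ne]
  · exact (smul_eq_zero.mp hsum).resolve_left hne
  · intro P _ hP h0
    simp [h0] at hP

theorem linForm_ne_zero {n : ℕ} {v : Fin (n + 1) → ℂ} (hv : v ≠ 0) : linForm n v ≠ 0 := by
  obtain ⟨i, hi⟩ := Function.ne_iff.mp hv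
  intro h
  have := congrArg (eval (Pi.single i 1)) h
  simp [linForm, Pi.single_apply] at this
  exact hi this

theorem rep_notMem_span_singleton_rep {n : ℕ} {P Q : ProjPt n} (h : P ≠ Q) :
    P.rep ∉ Submodule.span ℂ {Q.rep} := by
  intro hP
  obtain ⟨a, ha⟩ := Submodule.mem_span_singleton.mp hP
  apply h
  rw [← P.mk_rep, ← Q.mk_rep, Projectivization.mk_eq_mk_iff']
  exact ⟨a, ha⟩

/-- The `d`-th powers of at most `d + 1` pairwise non-proportional linear forms are
linearly independent. -/
theorem eq_zero_of_sum_smul_linForm_pow_eq_zero {n d : ℕ} {S : Finset (ProjPt n)}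
    {c : ProjPt n → ℂ} (hS : S.card ≤ d + 1)
    (h : ∑ P ∈ S, c P • linForm n P.rep ^ d = 0) : ∀ P ∈ S, c P = 0 := by
  induction d generalizing S c with
  | zero =>
    intro P hP
    obtain rfl : S = {P} := Finset.eq_singleton_iff_unique_mem.mpr
      ⟨hP, fun Q hQ => Finset.card_le_one.mp hS Q hQ P hP⟩
    simpa using h
  | succ d ih =>
    intro P hP
    by_cases hQ : ∃ Q ∈ S, P ≠ Q
    · obtain ⟨Q, hQS, hPQ⟩ := hQ
      obtain ⟨f, hfP, hfQ⟩ :=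
        Submodule.exists_le_ker_of_notMem (rep_notMem_span_singleton_rep hPQ)
      have hfQ0 : f Q.rep = 0 := hfQ (Submodule.mem_span_singleton_self _)
      have hlt : (S.filter fun R => f R.rep ≠ 0).card < S.card :=
        Finset.card_lt_card (Finset.filter_ssubset.mpr ⟨Q, hQS, by simpa using hfQ0⟩)
      have := ih (by omega) (sum_smul_linForm_pow_of_succ h f) P
        (Finset.mem_filter.mpr ⟨hP, hfP⟩)
      exact (mul_eq_zero.mp this).resolve_right hfP
    · push Not at hQ
      obtain rfl : S = {P} := Finset.eq_singleton_iff_unique_mem.mpr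
        ⟨hP, fun Q hQS => (hQ Q hQS).symm⟩
      rw [Finset.sum_singleton] at h
      exact (smul_eq_zero.mp h).resolve_right
        (pow_ne_zero _ (linForm_ne_zero P.rep_nonzero))

theorem add_two_le_card_of_sum_smul_linForm_pow_eq_zero {n d : ℕ} {S : Finset (ProjPt n)}
    {c : ProjPt n → ℂ} (hne : S.Nonempty) (hc : ∀ P ∈ S, c P ≠ 0)
    (h : ∑ P ∈ S, c P • linForm n P.rep ^ d = 0) : d + 2 ≤ S.card := by
  by_contra! hS
  obtain ⟨P, hP⟩ := hne
  exact hc P hP (eq_zero_of_sum_smul_linForm_pow_eq_zero (by omega) h P hP)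

/-- If `S` is not aligned, an aligned set lies in a hyperplane that does not contain `S`. -/
theorem exists_dual_vanishing_of_aligned {n : ℕ} {S U : Finset (ProjPt n)}
    (hS : 2 < Module.finrank ℂ
      (Submodule.span ℂ ((fun P : ProjPt n => P.rep) '' (S : Set (ProjPt n)))))
    (hU : Module.finrank ℂ
      (Submodule.span ℂ ((fun P : ProjPt n => P.rep) '' (U : Set (ProjPt n)))) ≤ 2) :
    ∃ f : Module.Dual ℂ (Fin (n + 1) → ℂ),
      (∀ P ∈ U, f P.rep = 0) ∧ ∃ P ∈ S, f P.rep ≠ 0 := by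
  obtain ⟨P, hP, hPU⟩ : ∃ P ∈ S, P.rep ∉
      Submodule.span ℂ ((fun P : ProjPt n => P.rep) '' (U : Set (ProjPt n))) := by
    by_contra! hcon
    have hle := Submodule.finrank_mono (Submodule.span_le.mpr (Set.image_subset_iff.mpr hcon))
    exact (hle.trans hU).not_gt hS
  obtain ⟨f, hfP, hfU⟩ := Submodule.exists_le_ker_of_notMem hPU
  exact ⟨f, fun Q hQ => hfU (Submodule.subset_span ⟨Q, hQ, rfl⟩), P, hP, hfP⟩

theorem finrank_span_rep_le_card {n : ℕ} (S : Finset (ProjPt n)) :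
    Module.finrank ℂ
      (Submodule.span ℂ ((fun P : ProjPt n => P.rep) '' (S : Set (ProjPt n)))) ≤ S.card := by
  classical
  rw [← Finset.coe_image]
  exact (finrank_span_finset_le_card _).trans Finset.card_image_le

/-- The support of a linear relation between the `d`-th powers of at most `2 * d + 1` pairwise
non-proportional linear forms is aligned. -/
theorem aligned_of_sum_smul_linForm_pow_eq_zero {n d : ℕ} {S : Finset (ProjPt n)}
    {c : ProjPt n → ℂ} (hS : S.card ≤ 2 * d + 1) (hc : ∀ P ∈ S, c P ≠ 0)
    (h : ∑ P ∈ S, c P • linForm n P.rep ^ d = 0) :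
    Module.finrank ℂ
      (Submodule.span ℂ ((fun P : ProjPt n => P.rep) '' (S : Set (ProjPt n)))) ≤ 2 := by
  classical
  induction d generalizing S c with
  | zero => exact (finrank_span_rep_le_card S).trans (by omega)
  | succ d ih =>
    by_contra! hS2
    have hcf (f : Module.Dual ℂ (Fin (n + 1) → ℂ)) :
        ∀ P ∈ S.filter (fun P => f P.rep ≠ 0), c P * f P.rep ≠ 0 := fun P hP =>
      mul_ne_zero (hc P (Finset.mem_filter.mp hP).1) (Finset.mem_filter.mp hP).2
    have hcard (f : Module.Dual ℂ (Fin (n + 1) → ℂ)) (hf : ∃ P ∈ S, f P.rep ≠ 0) :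
        d + 2 ≤ (S.filter fun P => f P.rep ≠ 0).card := by
      refine add_two_le_card_of_sum_smul_linForm_pow_eq_zero ?_ (hcf f)
        (sum_smul_linForm_pow_of_succ h f)
      obtain ⟨P, hP, hfP⟩ := hf
      exact ⟨P, Finset.mem_filter.mpr ⟨hP, hfP⟩⟩
    obtain ⟨U, hUS, hU⟩ :=
      Finset.exists_subset_card_eq (hS2.le.trans (finrank_span_rep_le_card S))
    obtain ⟨f, hfU, hf⟩ :=
      exists_dual_vanishing_of_aligned hS2 ((finrank_span_rep_le_card U).trans hU.le)
    have hle : (S.filter fun P => f P.rep ≠ 0).card ≤ 2 * d + 1 := by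
      have hsub : (S.filter fun P => f P.rep ≠ 0) ⊆ S \ U := fun P hP => by
        rw [Finset.mem_filter] at hP
        exact Finset.mem_sdiff.mpr ⟨hP.1, fun hPU => hP.2 (hfU P hPU)⟩
      have := Finset.card_le_card hsub
      rw [Finset.card_sdiff_of_subset hUS] at this
      omega
    obtain ⟨g, hgf, hg⟩ := exists_dual_vanishing_of_aligned hS2
      (ih hle (hcf f) (sum_smul_linForm_pow_of_succ h f))
    have hdisj : Disjoint (S.filter fun P => f P.rep ≠ 0) (S.filter fun P => g P.rep ≠ 0) :=
      Finset.disjoint_left.mpr fun P hPf hPg => (Finset.mem_filter.mp hPg).2 (hgf P hPf)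
    have hunion := Finset.card_le_card (Finset.union_subset
      (Finset.filter_subset (fun P => f P.rep ≠ 0) S)
      (Finset.filter_subset (fun P => g P.rep ≠ 0) S))
    rw [Finset.card_union_of_disjoint hdisj] at hunion
    have := hcard f hf
    have := hcard g hg
    omega

theorem isDecomp_iff_exists_sum {n d : ℕ} {T : MvPolynomial (Fin (n + 1)) ℂ}
    {A : Finset (ProjPt n)} :
    IsDecomp n d T A ↔ ∃ a : ProjPt n → ℂ, (∀ P ∉ A, a P = 0) ∧
      ∑ P ∈ A, a P • linForm n P.rep ^ d = T := by
  classical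
  rw [IsDecomp, Submodule.mem_span_image_finset_iff_exists_fun']
  constructor
  · rintro ⟨a, ha⟩
    refine ⟨fun P => if P ∈ A then a P else 0, fun P hP => if_neg hP, ?_⟩
    rw [← ha]
    exact Finset.sum_congr rfl fun P hP => by simp [hP]
  · rintro ⟨a, -, ha⟩
    exact ⟨a, ha⟩

/-- If `A` is a minimal decomposition of `T ∈ ℙ(Symᵈ(ℂⁿ⁺¹))` with `ℓ(A) ≤ d` containing
no aligned subset of cardinality `d/2` (i.e. every subset of `A` lying on a projective
line has cardinality `< d/2`), then `T` has rank `ℓ(A)` and is identifiable: every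
decomposition `B` of `T` with `ℓ(B) ≤ ℓ(A)` equals `A`. -/
theorem identifiable_of_no_aligned_subset (n d : ℕ) (T : MvPolynomial (Fin (n+1)) ℂ)
    (hT : T ≠ 0) (A : Finset (ProjPt n)) (hA : IsMinimalDecomp n d T A)
    (hcard : A.card ≤ d)
    (halign : ∀ S ⊆ A,
      Module.finrank ℂ
        ↥(Submodule.span ℂ ((fun P : ProjPt n => P.rep) '' (S : Set (ProjPt n)))) ≤ 2 →
      2 * S.card < d) :
    ∀ B : Finset (ProjPt n), IsDecomp n d T B → B.card ≤ A.card → B = A := by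
  classical
  intro B hB hBA
  obtain ⟨a, haA, ha⟩ := isDecomp_iff_exists_sum.mp hA.1
  obtain ⟨b, hbB, hb⟩ := isDecomp_iff_exists_sum.mp hB
  have ha0 : ∀ P ∈ A, a P ≠ 0 := by
    intro P hP h0
    refine hA.2 _ (Finset.erase_ssubset hP) (isDecomp_iff_exists_sum.mpr ⟨a, ?_, ?_⟩)
    · intro Q hQ
      by_cases hQP : Q = P
      · rw [hQP, h0]
      · exact haA Q fun hQA => hQ (Finset.mem_erase.mpr ⟨hQP, hQA⟩)
    · rw [← ha]
      exact Finset.sum_erase _ (by rw [h0, zero_smul])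
  have hmemB : ∀ P ∈ A, a P = b P → P ∈ B := fun P hP hab => by
    by_contra hPB
    exact ha0 P hP (hab.trans (hbB P hPB))
  set S := (A ∪ B).filter fun P => a P - b P ≠ 0 with hSdef
  have hrel : ∑ P ∈ S, (a P - b P) • linForm n P.rep ^ d = 0 := by
    rw [hSdef, Finset.sum_filter_of_ne fun P _ hP => left_ne_zero_of_smul hP]
    simp only [sub_smul, Finset.sum_sub_distrib]
    rw [← Finset.sum_subset Finset.subset_union_left fun P _ hP => by rw [haA P hP, zero_smul],
      ← Finset.sum_subset Finset.subset_union_right fun P _ hP => by rw [hbB P hP, zero_smul],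
      ha, hb, sub_self]
  have hc : ∀ P ∈ S, a P - b P ≠ 0 := fun P hP => (Finset.mem_filter.mp hP).2
  have hsdiff : A \ S ⊆ B \ S := fun P hP => by
    obtain ⟨hPA, hPS⟩ := Finset.mem_sdiff.mp hP
    refine Finset.mem_sdiff.mpr ⟨hmemB P hPA ?_, hPS⟩
    by_contra hab
    exact hPS (Finset.mem_filter.mpr ⟨Finset.mem_union_left _ hPA, sub_ne_zero.mpr hab⟩)
  rcases S.eq_empty_or_nonempty with hS | hS
  · rw [hS, Finset.sdiff_empty, Finset.sdiff_empty] at hsdiff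
    exact (Finset.eq_of_subset_of_card_le hsdiff hBA).symm
  · exfalso
    have hSAB : S ⊆ A ∪ B := Finset.filter_subset _ _
    have hScard := (Finset.card_le_card hSAB).trans (Finset.card_union_le A B)
    have hline := aligned_of_sum_smul_linForm_pow_eq_zero (by omega) hc hrel
    have hlarge := add_two_le_card_of_sum_smul_linForm_pow_eq_zero hS hc hrel
    have hsmall := halign (A ∩ S) Finset.inter_subset_left
      ((Submodule.finrank_mono (Submodule.span_mono
        (Set.image_mono (Finset.coe_subset.mpr Finset.inter_subset_right)))).trans hline)
    have hScover : S.card ≤ (A ∩ S).card + (B ∩ S).card := by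
      refine le_trans (Finset.card_le_card fun P hP => ?_) (Finset.card_union_le _ _)
      rw [← Finset.union_inter_distrib_right]
      exact Finset.mem_inter.mpr ⟨hSAB hP, hP⟩
    have := Finset.card_le_card hsdiff
    have := Finset.card_inter_add_card_sdiff A S
    have := Finset.card_inter_add_card_sdiff B S
    omega
end

section
/- Let Z ⊂ ℙⁿ(ℂ) be a finite set, let h be a nonzero linear form with hyperplane H = {h = 0}, let Z₁ = Z ∩ H and Z₂ = Z ∖ Z₁. Assume Z₂ is linearly independent. Then every quadric of H containing Z₁ lifts to a quadric of ℙⁿ containing Z: for every homogeneous quadratic form Q₀ on the subspace W = ker(h) ⊂ ℂⁿ⁺¹ vanishing at coordinate vectors of all points of Z₁, there exists a homogeneous polynomial Q of degree 2 on ℂⁿ⁺¹ vanishing at coordinate vectors of all points of Z whose restriction to W equals Q₀. -/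
open MvPolynomial

/-- A linearly independent family of vectors over a field admits a linear form with prescribed
values on it. -/
theorem LinearIndependent.exists_linearForm_apply_eq {ι K V : Type*} [Field K] [AddCommGroup V]
    [Module K V] {v : ι → V} (hv : LinearIndependent K v) (c : ι → K) :
    ∃ l : V →ₗ[K] K, ∀ i, l (v i) = c i := by
  obtain ⟨g, hg⟩ := LinearMap.exists_leftInverse_of_injective (Finsupp.linearCombination K v)
    (LinearMap.ker_eq_bot.mpr hv)
  refine ⟨Finsupp.linearCombination K c ∘ₗ g, fun i => ?_⟩
  have hi : g (v i) = Finsupp.single i 1 := by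
    simpa using LinearMap.congr_fun hg (Finsupp.single i 1)
  simp [hi]

/-- Every quadratic form on a finite coordinate space in which `2` is invertible is the evaluation
of a homogeneous polynomial of degree two. -/
theorem QuadraticForm.exists_isHomogeneous_eval_eq {σ R : Type*} [Fintype σ] [CommRing R]
    [Invertible (2 : R)] (q : QuadraticForm R (σ → R)) :
    ∃ p : MvPolynomial σ R, p.IsHomogeneous 2 ∧ ∀ x, eval x p = q x := by
  classical
  let M := LinearMap.toMatrix₂' R (QuadraticMap.associated (R := R) q)
  refine ⟨∑ i, ∑ j, C (M i j) * (X i * X j), ?_, fun x => ?_⟩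
  · refine IsHomogeneous.sum _ _ _ fun i _ => IsHomogeneous.sum _ _ _ fun j _ => ?_
    exact ((isHomogeneous_X R i).mul (isHomogeneous_X R j)).C_mul _
  · have hx : Matrix.toLinearMap₂' R M x x = q x := by
      rw [Matrix.toLinearMap₂'_toMatrix', QuadraticMap.associated_eq_self_apply]
    rw [← hx, Matrix.toLinearMap₂'_apply]
    simp only [map_sum, map_mul, eval_C, eval_X, smul_eq_mul]
    refine Finset.sum_congr rfl fun i _ => Finset.sum_congr rfl fun j _ => ?_
    ring

/-- Lifting quadrics from a hyperplane: let `Z ⊂ ℙⁿ(ℂ)` be finite, `h` a nonzero linear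
form with hyperplane `H = {h = 0}`, `Z₁ = Z ∩ H`, and `Z₂ = Z ∖ Z₁`.  If `Z₂` is linearly
independent, then every quadratic form `Q₀` on `W = ker h` vanishing at (coordinate
vectors of) the points of `Z₁` is the restriction to `W` of a quadric `Q` of `ℙⁿ`
vanishing at all points of `Z`. -/
theorem lift_quadric_of_residue_indep (n : ℕ) (Z : Finset (ProjPt n))
    (h : (Fin (n+1) → ℂ) →ₗ[ℂ] ℂ) (hh : h ≠ 0)
    (hindep : LinearIndependent ℂ
      (fun P : { x : ProjPt n // x ∈ Z ∧ h x.rep ≠ 0 } => P.1.rep))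
    (Q₀ : QuadraticForm ℂ ↥(LinearMap.ker h))
    (hQ₀ : ∀ P ∈ Z, ∀ hp : P.rep ∈ LinearMap.ker h, Q₀ ⟨P.rep, hp⟩ = 0) :
    ∃ Q : MvPolynomial (Fin (n+1)) ℂ, Q.IsHomogeneous 2 ∧
      (∀ P ∈ Z, eval P.rep Q = 0) ∧
      (∀ w : ↥(LinearMap.ker h), eval (w : Fin (n+1) → ℂ) Q = Q₀ w) := by
  obtain ⟨π, hπ⟩ := (LinearMap.ker h).subtype.exists_leftInverse_of_injective
    (LinearMap.ker h).ker_subtype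
  have hπ' (w : LinearMap.ker h) : π w = w := LinearMap.congr_fun hπ w
  obtain ⟨l, hl⟩ := hindep.exists_linearForm_apply_eq
    fun P => -Q₀ (π P.1.rep) / h P.1.rep
  obtain ⟨Q, hQ, hQeval⟩ := QuadraticForm.exists_isHomogeneous_eval_eq
    (Q₀.comp π + QuadraticMap.linMulLin h l)
  have hQeval' (x : Fin (n + 1) → ℂ) : eval x Q = Q₀ (π x) + h x * l x := by
    simp [hQeval]
  have hrestrict (w : LinearMap.ker h) : eval (w : Fin (n + 1) → ℂ) Q = Q₀ w := by
    rw [hQeval', hπ', LinearMap.mem_ker.mp w.2, zero_mul, add_zero]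
  refine ⟨Q, hQ, fun P hP => ?_, hrestrict⟩
  by_cases hp : h P.rep = 0
  · exact (hrestrict ⟨P.rep, hp⟩).trans (hQ₀ P hP hp)
  · rw [hQeval', hl ⟨P, hP, hp⟩]
    field_simp
    ring
end
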